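/- arXiv:1401.2073 — 2 statements merged into one kernel-verified Lean document; each statement's English description precedes it below -/
import Mathlib

section
/- As n → ∞ the recurrence coefficients satisfy β_n → 1/4, lim_{n→∞} n²·(β_n − 1/4) = (1−4α²)/16, and lim_{n→∞} n³·(β_n − 1/4 − (1−4α²)/(16n²)) = ((4α²−1)/8)·(α + β − β/√(1−k²)). -/
open MeasureTheory
open Polynomial Filter Topology

/-!
Write `L f = ∫ f w`, `c = 1 / √k2` and `S f = ∫ f w / (c - x)`, so that `S ((c - X) f) = L f`.
Expanding `P (n + 1)` around `c` shows that `V = S`, `μ = 1` satisfy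
`V (P (n + 1) P n) (V (P (n + 1) P n) + μ h n) = V (P (n + 1)²) V (P n ²)`; together with the
three-term recurrence, `t n = μ + 2 V (P (n + 1) P n) / h n` then obeys
`c² (t (n + 1)² - μ²) = b (n + 2) (t n + t (n + 1)) (t (n + 1) + t (n + 2))`.
Integrating by parts against `1 + X` gives a second functional with the same property, at the
endpoint `c = 1` and with `μ = 2 α`. As `P (n + 1) P n` is odd, the two solutions `Z` and `2 τ` are
tied by `τ n = n + 1 + α + β - β Z n`, so `b` and `Z` solve a closed system.

Positivity bounds `Z`, so `τ n ~ n` and the equation for `τ` gives `b → 1 / 4`. The equation for `Z`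
is then asymptotically autonomous and contracts `Z` to `z = 1 / √(1 - k2)`; linearised at `z`, its
coefficients have sum `k2 < 1` and its source is of order `n⁻²`, whence `n² (Z n - z)` converges.
Thus `τ` is an arithmetic progression with offset `α + β - β z` up to `e / n² + o(n⁻²)`, and the
equation for `τ` yields the expansion of `b`.
-/

section ThreeTermInequality

variable {x : ℕ → ℝ} {q : ℝ}

lemma nonpos_of_le_mul_max (hq0 : 0 ≤ q) (hq1 : q < 1) (hbdd : BddAbove (Set.range x))
    (h0 : x 0 ≤ 0) (hx : ∀ n, x (n + 1) ≤ q * max (x n) (max (x (n + 1)) (x (n + 2)))) (n : ℕ) :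
    x n ≤ 0 := by
  have hle : ∀ n, x n ≤ max 0 (q * ⨆ m, x m) := fun n => by
    cases n with
    | zero => exact le_max_of_le_left h0
    | succ n =>
      refine le_max_of_le_right ((hx n).trans (mul_le_mul_of_nonneg_left ?_ hq0))
      exact max_le (le_ciSup hbdd _) (max_le (le_ciSup hbdd _) (le_ciSup hbdd _))
  have hsup : ⨆ m, x m ≤ max 0 (q * ⨆ m, x m) := ciSup_le hle
  refine (le_ciSup hbdd n).trans (not_lt.1 fun hpos => ?_)
  exact hsup.not_gt (max_lt hpos (mul_lt_of_lt_one_left hpos hq1))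

lemma tendsto_zero_of_abs_le_mul_max_add {ρ : ℕ → ℝ} {K : ℝ} (hq0 : 0 ≤ q) (hq1 : q < 1)
    (hK : ∀ᶠ n in atTop, |x n| ≤ K) (hρ : Tendsto ρ atTop (𝓝 0))
    (hx : ∀ᶠ n in atTop, |x (n + 1)| ≤ q * max |x n| (max |x (n + 1)| |x (n + 2)|) + ρ n) :
    Tendsto x atTop (𝓝 0) := by
  refine Metric.tendsto_nhds.2 fun ε hε => ?_
  simp only [Real.dist_0_eq_abs]
  have hρε : ∀ᶠ n in atTop, ρ n ≤ (1 - q) * (ε / 2) :=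
    hρ.eventually_le_const (mul_pos (sub_pos.2 hq1) (half_pos hε))
  have hiter : ∀ k : ℕ, ∀ᶠ n in atTop, |x n| ≤ q ^ k * K + ε / 2 := fun k => by
    induction k with
    | zero => exact hK.mono fun n hn => by linarith
    | succ k ih =>
      rw [← map_add_atTop_eq_nat 1, eventually_map]
      filter_upwards [ih, (tendsto_add_atTop_nat 1).eventually ih,
        (tendsto_add_atTop_nat 2).eventually ih, hρε, hx] with n ih₀ ih₁ ih₂ hρn hxn
      have hmax := mul_le_mul_of_nonneg_left (max_le ih₀ (max_le ih₁ ih₂)) hq0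
      linarith [pow_succ' q k, congrArg (· * K) (pow_succ' q k)]
  have hpow : Tendsto (fun k : ℕ => q ^ k * K) atTop (𝓝 0) := by
    simpa only [zero_mul] using (tendsto_pow_atTop_nhds_zero_of_lt_one hq0 hq1).mul_const K
  obtain ⟨k, hk⟩ := (hpow.eventually_lt_const (half_pos hε)).exists
  filter_upwards [hiter k] with n hn
  linarith

lemma mul_max_le_mul_max_sub_add {e x₀ x₁ x₂ e₀ e₁ e₂ : ℝ} (hq0 : 0 ≤ q) (h₀ : q * e₀ ≤ e)
    (h₁ : q * e₁ ≤ e) (h₂ : q * e₂ ≤ e) :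
    q * max x₀ (max x₁ x₂) ≤ q * max (x₀ - e₀) (max (x₁ - e₁) (x₂ - e₂)) + e := by
  set s := max (x₀ - e₀) (max (x₁ - e₁) (x₂ - e₂))
  have hle {y u : ℝ} (hu : q * u ≤ e) (hy : y - u ≤ s) : q * y ≤ q * s + e := by
    linarith [mul_le_mul_of_nonneg_left hy hq0]
  rw [mul_max_of_nonneg _ _ hq0, mul_max_of_nonneg _ _ hq0]
  exact max_le (hle h₀ (le_max_left _ _)) (max_le
    (hle h₁ ((le_max_left _ _).trans (le_max_right _ _)))
    (hle h₂ ((le_max_right _ _).trans (le_max_right _ _))))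

-- The barrier `D / ω` satisfies the reverse inequality once `D` is large, since `ω` varies slowly.
lemma exists_mul_abs_le_of_abs_le_mul_max_add {ω : ℕ → ℝ} {K M : ℝ} (hq0 : 0 ≤ q) (hq1 : q < 1)
    (hω : ∀ n, 0 < ω n) (hω1 : Tendsto (fun n => ω (n + 1) / ω n) atTop (𝓝 1))
    (hK : ∀ n, |x n| ≤ K)
    (hx : ∀ᶠ n in atTop,
      |x (n + 1)| ≤ q * max |x n| (max |x (n + 1)| |x (n + 2)|) + M / ω (n + 1)) :
    ∃ D, ∀ᶠ n in atTop, ω n * |x n| ≤ D := by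
  obtain ⟨q', hq', hq'1⟩ := exists_between hq1
  have hratio : ∀ᶠ n in atTop, q * (ω (n + 1) / ω n) ≤ q' :=
    (by simpa only [mul_one] using hω1.const_mul q : Tendsto _ _ (𝓝 q)).eventually_le_const hq'
  have hratio' : ∀ᶠ n in atTop, q * (ω (n + 1) / ω (n + 2)) ≤ q' := by
    have hinv := (hω1.inv₀ one_ne_zero).const_mul q
    simp only [inv_div, inv_one, mul_one] at hinv
    exact (tendsto_add_atTop_nat 1).eventually (hinv.eventually_le_const hq')
  obtain ⟨N, hN⟩ := eventually_atTop.1 (hx.and (hratio.and hratio'))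
  set D := max (K * ω N) (max (M / (1 - q')) 0)
  have hDK : K * ω N ≤ D := le_max_left _ _
  have hDM : M ≤ D * (1 - q') :=
    (div_le_iff₀ (sub_pos.2 hq'1)).1 ((le_max_left _ _).trans (le_max_right _ _))
  have hD0 : 0 ≤ D := (le_max_right _ _).trans (le_max_right _ _)
  have hbarrier : ∀ n, |x (n + N)| - D / ω (n + N) ≤ 0 := by
    refine nonpos_of_le_mul_max hq0 hq1 ⟨K, ?_⟩ ?_ fun n => ?_
    · rintro _ ⟨n, rfl⟩
      exact (sub_le_self _ (div_nonneg hD0 (hω _).le)).trans (hK _)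
    · rw [zero_add, sub_nonpos, le_div_iff₀ (hω N)]
      exact (mul_le_mul_of_nonneg_right (hK N) (hω N).le).trans hDK
    · obtain ⟨hxm, hm, hm'⟩ := hN (n + N) (Nat.le_add_left N n)
      rw [Nat.add_right_comm n 1 N, Nat.add_right_comm n 2 N]
      set E := D / ω (n + N + 1)
      have hscale : ∀ j, q * (ω (n + N + 1) / ω j) ≤ q' → q * (D / ω j) ≤ q' * E := fun j hj => by
        have hD : D = ω (n + N + 1) * E := (mul_div_cancel₀ _ (hω _).ne').symm
        rw [hD, mul_div_right_comm, ← mul_assoc]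
        exact mul_le_mul_of_nonneg_right hj (div_nonneg hD0 (hω _).le)
      have hsource : M / ω (n + N + 1) ≤ (1 - q') * E := by
        rw [mul_div_assoc', mul_comm]
        exact div_le_div_of_nonneg_right hDM (hω _).le
      have hself : q * (ω (n + N + 1) / ω (n + N + 1)) ≤ q' := by
        rw [div_self (hω _).ne', mul_one]
        exact hq'.le
      linarith [mul_max_le_mul_max_sub_add (x₀ := |x (n + N)|) (x₁ := |x (n + N + 1)|)
        (x₂ := |x (n + N + 2)|) hq0 (hscale _ hm) (hscale _ hself) (hscale _ hm')]
  refine ⟨D, eventually_atTop.2 ⟨N, fun n hn => ?_⟩⟩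
  have := hbarrier (n - N)
  rw [Nat.sub_add_cancel hn, sub_nonpos, le_div_iff₀ (hω n)] at this
  rwa [mul_comm]

lemma abs_mul_add_mul_add_mul_le (b c d x₀ x₁ x₂ : ℝ) :
    |b * x₀ + c * x₁ + d * x₂| ≤ (|b| + |c| + |d|) * max |x₀| (max |x₁| |x₂|) := by
  set m := max |x₀| (max |x₁| |x₂|)
  have h₀ : |x₀| ≤ m := le_max_left _ _
  have h₁ : |x₁| ≤ m := (le_max_left _ _).trans (le_max_right _ _)
  have h₂ : |x₂| ≤ m := (le_max_right _ _).trans (le_max_right _ _)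
  calc |b * x₀ + c * x₁ + d * x₂| ≤ |b| * |x₀| + |c| * |x₁| + |d| * |x₂| := by
        simpa only [abs_mul] using abs_add_three (b * x₀) (c * x₁) (d * x₂)
    _ ≤ |b| * m + |c| * m + |d| * m := by gcongr
    _ = (|b| + |c| + |d|) * m := by ring

end ThreeTermInequality

section ThreeTermRecurrence

variable {x A B C D : ℕ → ℝ} {l b c d K : ℝ}

lemma tendsto_of_three_term (hK : ∀ᶠ n in atTop, |x n| ≤ K) (hA : Tendsto A atTop (𝓝 l))
    (hB : Tendsto B atTop (𝓝 b)) (hC : Tendsto C atTop (𝓝 c)) (hD : Tendsto D atTop (𝓝 d))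
    (hbcd : |b| + |c| + |d| < 1)
    (hx : ∀ᶠ n in atTop, x (n + 1) = A n + (B n * x n + C n * x (n + 1) + D n * x (n + 2))) :
    Tendsto x atTop (𝓝 (l / (1 - (b + c + d)))) := by
  set x' := l / (1 - (b + c + d)) with hx'
  have hsum : 1 - (b + c + d) ≠ 0 := by
    linarith [le_abs_self b, le_abs_self c, le_abs_self d]
  have hfix : l + (b + c + d - 1) * x' = 0 := by
    rw [hx']
    field_simp
    ring
  obtain ⟨q, hq, hq1⟩ := exists_between hbcd
  have hq0 : 0 ≤ q := by linarith [abs_nonneg b, abs_nonneg c, abs_nonneg d]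
  set ρ := fun n => A n + (B n + C n + D n - 1) * x'
  have hρ : Tendsto (fun n => |ρ n|) atTop (𝓝 0) := by
    have := (hA.add ((((hB.add hC).add hD).sub_const 1).mul_const x')).abs
    rwa [hfix, abs_zero] at this
  have hcoeff : ∀ᶠ n in atTop, |B n| + |C n| + |D n| ≤ q :=
    ((hB.abs.add hC.abs).add hD.abs).eventually_le_const hq
  refine tendsto_sub_nhds_zero_iff.1 (tendsto_zero_of_abs_le_mul_max_add hq0 hq1
    (K := K + |x'|) (hK.mono fun n hn => (abs_sub _ _).trans (by gcongr)) hρ ?_)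
  filter_upwards [hx, hcoeff] with n hxn hqn
  have herror : x (n + 1) - x'
      = B n * (x n - x') + C n * (x (n + 1) - x') + D n * (x (n + 2) - x') + ρ n := by
    linear_combination hxn
  calc |x (n + 1) - x'|
      ≤ |B n * (x n - x') + C n * (x (n + 1) - x') + D n * (x (n + 2) - x')| + |ρ n| :=
        (congrArg abs herror).trans_le (abs_add_le _ _)
    _ ≤ q * max |x n - x'| (max |x (n + 1) - x'| |x (n + 2) - x'|) + |ρ n| := by
        gcongr
        exact (abs_mul_add_mul_add_mul_le _ _ _ _ _ _).trans
          (mul_le_mul_of_nonneg_right hqn (le_max_of_le_left (abs_nonneg _)))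

lemma tendsto_mul_of_three_term {ω : ℕ → ℝ} (hω : ∀ n, 0 < ω n)
    (hω1 : Tendsto (fun n => ω (n + 1) / ω n) atTop (𝓝 1)) (hK : ∀ n, |x n| ≤ K)
    (hA : Tendsto (fun n => ω (n + 1) * A n) atTop (𝓝 l))
    (hB : Tendsto B atTop (𝓝 b)) (hC : Tendsto C atTop (𝓝 c)) (hD : Tendsto D atTop (𝓝 d))
    (hbcd : |b| + |c| + |d| < 1)
    (hx : ∀ᶠ n in atTop, x (n + 1) = A n + (B n * x n + C n * x (n + 1) + D n * x (n + 2))) :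
    Tendsto (fun n => ω n * x n) atTop (𝓝 (l / (1 - (b + c + d)))) := by
  obtain ⟨q, hq, hq1⟩ := exists_between hbcd
  have hq0 : 0 ≤ q := by linarith [abs_nonneg b, abs_nonneg c, abs_nonneg d]
  obtain ⟨M, hM⟩ := hA.abs.bddAbove_range
  have hineq : ∀ᶠ n in atTop,
      |x (n + 1)| ≤ q * max |x n| (max |x (n + 1)| |x (n + 2)|) + M / ω (n + 1) := by
    filter_upwards [hx, ((hB.abs.add hC.abs).add hD.abs).eventually_le_const hq] with n hxn hqn
    have hAn : |A n| ≤ M / ω (n + 1) := by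
      rw [le_div_iff₀ (hω _), mul_comm, ← abs_of_pos (hω (n + 1)), ← abs_mul]
      exact hM ⟨n, rfl⟩
    calc |x (n + 1)| ≤ |B n * x n + C n * x (n + 1) + D n * x (n + 2)| + |A n| :=
          (congrArg abs (hxn.trans (add_comm _ _))).trans_le (abs_add_le _ _)
      _ ≤ q * max |x n| (max |x (n + 1)| |x (n + 2)|) + M / ω (n + 1) := by
          refine add_le_add ((abs_mul_add_mul_add_mul_le _ _ _ _ _ _).trans ?_) hAn
          exact mul_le_mul_of_nonneg_right hqn (le_max_of_le_left (abs_nonneg _))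
  obtain ⟨E, hE⟩ := exists_mul_abs_le_of_abs_le_mul_max_add hq0 hq1 hω hω1 hK hineq
  have hbdd : ∀ᶠ n in atTop, |ω n * x n| ≤ E := by
    simpa only [abs_mul, abs_of_pos (hω _)] using hE
  have hω2 : Tendsto (fun n => ω (n + 1) / ω (n + 2)) atTop (𝓝 1) := by
    simpa only [inv_div, inv_one] using
      ((tendsto_add_atTop_iff_nat 1).2 hω1).inv₀ one_ne_zero
  refine tendsto_of_three_term hbdd hA (by simpa only [mul_one] using hB.mul hω1) hC
    (by simpa only [mul_one] using hD.mul hω2) hbcd (hx.mono fun n hxn => ?_)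
  have := (hω n).ne'
  have := (hω (n + 2)).ne'
  field_simp
  linear_combination ω (n + 1) * hxn

end ThreeTermRecurrence

section QuadraticRecurrence

lemma abs_add_mul_add_div_four_sub_le {a₀ a₁ a₂ s : ℝ} (h₀ : 0 ≤ a₀) (h₁ : 0 ≤ a₁) (h₂ : 0 ≤ a₂) :
    |(a₀ + a₁) * (a₁ + a₂) / 4 - s| ≤ max |a₀ ^ 2 - s| (max |a₁ ^ 2 - s| |a₂ ^ 2 - s|) := by
  set m := max |a₀ ^ 2 - s| (max |a₁ ^ 2 - s| |a₂ ^ 2 - s|)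
  have hm₀ : |a₀ ^ 2 - s| ≤ m := le_max_left _ _
  have hm₁ : |a₁ ^ 2 - s| ≤ m := (le_max_left _ _).trans (le_max_right _ _)
  have hm₂ : |a₂ ^ 2 - s| ≤ m := (le_max_right _ _).trans (le_max_right _ _)
  have hmul {u v : ℝ} (hu : 0 ≤ u) (hv : 0 ≤ v) (hum : |u ^ 2 - s| ≤ m) (hvm : |v ^ 2 - s| ≤ m) :
      |u * v - s| ≤ m := by
    rw [abs_le] at hum hvm ⊢
    refine ⟨?_, by linarith [two_mul_le_add_sq u v]⟩
    rcases le_total u v with huv | hvu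
    · linarith [mul_le_mul_of_nonneg_left huv hu]
    · linarith [mul_le_mul_of_nonneg_right hvu hv]
  have h₀₁ := abs_le.1 (hmul h₀ h₁ hm₀ hm₁)
  have h₀₂ := abs_le.1 (hmul h₀ h₂ hm₀ hm₂)
  have h₁₂ := abs_le.1 (hmul h₁ h₂ hm₁ hm₂)
  have h₁₁ := abs_le.1 hm₁
  refine abs_le.2 ⟨?_, ?_⟩ <;> linarith

lemma tendsto_one_div_sqrt_one_sub_of_sq_sub_one_eq {Z c : ℕ → ℝ} {κ K : ℝ} (hκ0 : 0 ≤ κ)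
    (hκ1 : κ < 1) (hZ0 : ∀ n, 0 ≤ Z n) (hZK : ∀ n, Z n ≤ K) (hc : Tendsto c atTop (𝓝 (κ / 4)))
    (hZ : ∀ n, Z (n + 1) ^ 2 - 1 = c n * ((Z n + Z (n + 1)) * (Z (n + 1) + Z (n + 2)))) :
    Tendsto Z atTop (𝓝 (1 / √(1 - κ))) := by
  have hK0 : 0 ≤ K := (hZ0 0).trans (hZK 0)
  set s := 1 / (1 - κ) with hs_def
  have hs : (1 - κ) * s = 1 := mul_one_div_cancel (sub_pos.2 hκ1).ne'
  have hs0 : 0 ≤ s := one_div_nonneg.2 (sub_pos.2 hκ1).le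
  have hbound : ∀ n, |Z n ^ 2 - s| ≤ K ^ 2 + s := fun n => abs_le.2
    ⟨by linarith [sq_nonneg (Z n), sq_nonneg K], by linarith [pow_le_pow_left₀ (hZ0 n) (hZK n) 2]⟩
  have hρ : Tendsto (fun n => |c n - κ / 4| * (4 * K ^ 2)) atTop (𝓝 0) := by
    simpa only [sub_self, abs_zero, zero_mul] using
      (hc.sub_const (κ / 4)).abs.mul_const (4 * K ^ 2)
  have hsq : Tendsto (fun n => Z n ^ 2) atTop (𝓝 s) := by
    refine tendsto_sub_nhds_zero_iff.1 (tendsto_zero_of_abs_le_mul_max_add hκ0 hκ1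
      (.of_forall hbound) hρ (.of_forall fun n => ?_))
    set Q := (Z n + Z (n + 1)) * (Z (n + 1) + Z (n + 2))
    have hQ0 : 0 ≤ Q := mul_nonneg (add_nonneg (hZ0 _) (hZ0 _)) (add_nonneg (hZ0 _) (hZ0 _))
    have hQK : Q ≤ 4 * K ^ 2 := by
      have := mul_le_mul (add_le_add (hZK n) (hZK (n + 1))) (add_le_add (hZK (n + 1)) (hZK (n + 2)))
        (add_nonneg (hZ0 _) (hZ0 _)) (add_nonneg hK0 hK0)
      linarith
    have herror : Z (n + 1) ^ 2 - s = κ * (Q / 4 - s) + (c n - κ / 4) * Q := by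
      linear_combination hZ n - hs
    calc |Z (n + 1) ^ 2 - s| ≤ |κ * (Q / 4 - s)| + |(c n - κ / 4) * Q| :=
          (congrArg abs herror).trans_le (abs_add_le _ _)
      _ = κ * |Q / 4 - s| + |c n - κ / 4| * Q := by
          rw [abs_mul, abs_mul, abs_of_nonneg hκ0, abs_of_nonneg hQ0]
      _ ≤ _ := by
          gcongr
          exact abs_add_mul_add_div_four_sub_le (hZ0 _) (hZ0 _) (hZ0 _)
  simpa only [Real.sqrt_sq (hZ0 _), hs_def, Real.sqrt_div' _ (sub_pos.2 hκ1).le, Real.sqrt_one]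
    using hsq.sqrt

end QuadraticRecurrence

section DifferenceEquation

variable {ι : Type*} {l : Filter ι} {N t t₀ t₁ t₂ b : ι → ℝ} {α θ e : ℝ}

lemma tendsto_add_mul_add_div_sq (hN : Tendsto N l atTop)
    (h₀ : Tendsto (fun i => t₀ i / N i) l (𝓝 1)) (h₁ : Tendsto (fun i => t₁ i / N i) l (𝓝 1))
    (h₂ : Tendsto (fun i => t₂ i / N i) l (𝓝 1)) :
    Tendsto (fun i => (t₀ i + t₁ i) * (t₁ i + t₂ i) / N i ^ 2) l (𝓝 4) := by
  refine (((h₀.add h₁).mul (h₁.add h₂)).congr' ?_).trans_eq (by norm_num)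
  filter_upwards [hN.eventually_gt_atTop 0] with i hi
  field_simp

lemma tendsto_quarter_of_sq_sub_sq_eq (hN : Tendsto N l atTop)
    (h₀ : Tendsto (fun i => t₀ i / N i) l (𝓝 1)) (h₁ : Tendsto (fun i => t₁ i / N i) l (𝓝 1))
    (h₂ : Tendsto (fun i => t₂ i / N i) l (𝓝 1))
    (hb : ∀ i, t₁ i ^ 2 - α ^ 2 = b i * ((t₀ i + t₁ i) * (t₁ i + t₂ i))) :
    Tendsto b l (𝓝 (1 / 4)) := by
  have hD := tendsto_add_mul_add_div_sq hN h₀ h₁ h₂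
  have hα : Tendsto (fun i => α ^ 2 / N i ^ 2) l (𝓝 0) :=
    ((tendsto_pow_atTop two_ne_zero).comp hN).const_div_atTop _
  have hlim := ((h₁.pow 2).sub hα).div hD four_ne_zero
  simp only [one_pow, sub_zero] at hlim
  refine hlim.congr' ?_
  filter_upwards [hN.eventually_gt_atTop 0, hD.eventually_ne four_ne_zero] with i hi hDi
  have : (t₀ i + t₁ i) * (t₁ i + t₂ i) ≠ 0 := (div_ne_zero_iff.1 hDi).1
  simp only [Pi.div_apply]
  rw [div_eq_iff hDi]
  field_simp
  linear_combination hb i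

lemma tendsto_sub_of_tendsto_sq_mul_sub (hN : Tendsto N l atTop)
    (ht : Tendsto (fun i => N i ^ 2 * (t i - (N i + θ))) l (𝓝 e)) :
    Tendsto (fun i => t i - N i) l (𝓝 θ) := by
  have hlim := (ht.div_atTop ((tendsto_pow_atTop two_ne_zero).comp hN)).add_const θ
  rw [zero_add] at hlim
  refine hlim.congr' ?_
  filter_upwards [hN.eventually_gt_atTop 0] with i hi
  simp only [Function.comp_apply]
  field_simp
  ring

lemma tendsto_div_of_isBigO_sub (hN : Tendsto N l atTop)
    (ht : (fun i => t i - N i) =O[l] (1 : ι → ℝ)) : Tendsto (fun i => t i / N i) l (𝓝 1) := by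
  have hlim := (ht.trans_isLittleO
    ((Asymptotics.isLittleO_const_left_of_ne one_ne_zero).2
      (tendsto_norm_atTop_atTop.comp hN))).tendsto_div_nhds_zero.add_const 1
  rw [zero_add] at hlim
  refine hlim.congr' ?_
  filter_upwards [hN.eventually_gt_atTop 0] with i hi
  field_simp
  ring

lemma tendsto_four_mul_sq_sub_div (hN : Tendsto N l atTop)
    (h₀ : Tendsto (fun i => t₀ i - N i) l (𝓝 (θ - 1))) (h₁ : Tendsto (fun i => t₁ i - N i) l (𝓝 θ))
    (h₂ : Tendsto (fun i => t₂ i - N i) l (𝓝 (θ + 1))) :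
    Tendsto (fun i => (4 * N i ^ 2 - (t₀ i + t₁ i) * (t₁ i + t₂ i)) / N i) l (𝓝 (-(8 * θ))) := by
  have hlower := h₀.add h₁
  have hupper := h₁.add h₂
  have hlim := (((hlower.add hupper).const_mul 2).add ((hlower.mul hupper).div_atTop hN)).neg
  refine (hlim.congr' ?_).trans_eq (congrArg 𝓝 (by ring))
  filter_upwards [hN.eventually_gt_atTop 0] with i hi
  field_simp
  ring

lemma tendsto_mul_sub_quarter_mul_sub (hN : Tendsto N l atTop)
    (h₀ : Tendsto (fun i => N i ^ 2 * (t₀ i - (N i + (θ - 1)))) l (𝓝 e))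
    (h₁ : Tendsto (fun i => N i ^ 2 * (t₁ i - (N i + θ))) l (𝓝 e))
    (h₂ : Tendsto (fun i => N i ^ 2 * (t₂ i - (N i + (θ + 1)))) l (𝓝 e))
    (hb : ∀ i, t₁ i ^ 2 - α ^ 2 = b i * ((t₀ i + t₁ i) * (t₁ i + t₂ i))) :
    Tendsto (fun i => N i * ((b i - 1 / 4) * ((t₀ i + t₁ i) * (t₁ i + t₂ i)) - (1 / 4 - α ^ 2)))
      l (𝓝 0) := by
  have hratio := tendsto_div_of_isBigO_sub hN
    ((tendsto_sub_of_tendsto_sq_mul_sub hN h₁).isBigO_one ℝ)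
  have hbackward := h₁.sub h₀
  have hforward := h₂.sub h₁
  have hlim := (((hbackward.add hforward).add ((hbackward.mul hforward).div_atTop
    ((tendsto_pow_atTop two_ne_zero).comp hN))).div_atTop (hN.const_mul_atTop four_pos)).sub
    ((hratio.mul (hforward.sub hbackward)).div_const 2)
  simp only [sub_self, mul_zero, zero_div] at hlim
  refine hlim.congr' ?_
  filter_upwards [hN.eventually_gt_atTop 0] with i hi
  simp only [Function.comp_apply]
  field_simp
  linear_combination 8 * hb i

theorem tendsto_expansion_of_sq_sub_sq_eq (hN : Tendsto N l atTop)
    (h₀ : Tendsto (fun i => N i ^ 2 * (t₀ i - (N i + (θ - 1)))) l (𝓝 e))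
    (h₁ : Tendsto (fun i => N i ^ 2 * (t₁ i - (N i + θ))) l (𝓝 e))
    (h₂ : Tendsto (fun i => N i ^ 2 * (t₂ i - (N i + (θ + 1)))) l (𝓝 e))
    (hb : ∀ i, t₁ i ^ 2 - α ^ 2 = b i * ((t₀ i + t₁ i) * (t₁ i + t₂ i))) :
    Tendsto (fun i => N i ^ 2 * (b i - 1 / 4)) l (𝓝 ((1 - 4 * α ^ 2) / 16)) ∧
      Tendsto (fun i => N i ^ 3 * (b i - 1 / 4 - (1 - 4 * α ^ 2) / (16 * N i ^ 2))) l
        (𝓝 ((4 * α ^ 2 - 1) / 8 * θ)) := by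
  have hsub₀ := tendsto_sub_of_tendsto_sq_mul_sub hN h₀
  have hsub₁ := tendsto_sub_of_tendsto_sq_mul_sub hN h₁
  have hsub₂ := tendsto_sub_of_tendsto_sq_mul_sub hN h₂
  set D := fun i => (t₀ i + t₁ i) * (t₁ i + t₂ i)
  have hD : Tendsto (fun i => D i / N i ^ 2) l (𝓝 4) := tendsto_add_mul_add_div_sq hN
    (tendsto_div_of_isBigO_sub hN (hsub₀.isBigO_one ℝ))
    (tendsto_div_of_isBigO_sub hN (hsub₁.isBigO_one ℝ))
    (tendsto_div_of_isBigO_sub hN (hsub₂.isBigO_one ℝ))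
  have hD_inv := hD.inv₀ four_ne_zero
  have hdefect : Tendsto (fun i => (4 * N i ^ 2 - D i) / N i) l (𝓝 (-(8 * θ))) :=
    tendsto_four_mul_sq_sub_div hN hsub₀ hsub₁ hsub₂
  have hsource : Tendsto (fun i => N i * ((b i - 1 / 4) * D i - (1 / 4 - α ^ 2))) l (𝓝 0) :=
    tendsto_mul_sub_quarter_mul_sub hN h₀ h₁ h₂ hb
  have hne : ∀ᶠ i in l, 0 < N i ∧ D i ≠ 0 :=
    (hN.eventually_gt_atTop 0).and <|
      (hD.eventually_ne four_ne_zero).mono fun i hi => (div_ne_zero_iff.1 hi).1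
  constructor
  · have hlim := hD_inv.mul ((hsource.div_atTop hN).add_const (1 / 4 - α ^ 2))
    refine (hlim.congr' ?_).trans_eq (congrArg 𝓝 (by ring))
    filter_upwards [hne] with i ⟨hNi, hDi⟩
    field_simp
    ring
  · have hlim := hD_inv.mul (hsource.add ((hdefect.const_mul (1 / 4 - α ^ 2)).div_const 4))
    refine (hlim.congr' ?_).trans_eq (congrArg 𝓝 (by ring))
    filter_upwards [hne] with i ⟨hNi, hDi⟩
    field_simp
    ring

end DifferenceEquation

section CoupledRecurrence

/-- The factor with which the defect of the `τ`-equation enters the equation for `Z n - z`: the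
right-hand side of the `Z`-equation over that of the `τ`-equation, linearised at `Z = z`. -/
noncomputable def couplingFactor (κ z : ℝ) (Z τ : ℕ → ℝ) (n : ℕ) : ℝ :=
  κ * ((Z n + Z (n + 1)) * (Z (n + 1) + Z (n + 2)))
    / (2 * z * ((τ n + τ (n + 1)) * (τ (n + 1) + τ (n + 2))))

-- Grouped so that, as `x₁`, `x₂`, `G` and `G * t₁` tend to `0`, the coefficients of `x₀`, `x₁`,
-- `x₂` tend to `κ / 4`, `κ / 2`, `κ / 4`, whose sum is less than `1`.
lemma coupled_recurrence_linearization {α β κ b z x₀ x₁ x₂ t₀ t₁ t₂ D G : ℝ} (hz0 : z ≠ 0)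
    (hz : (1 - κ) * z ^ 2 = 1) (hD : D = (t₀ + t₁) * (t₁ + t₂)) (hD0 : D ≠ 0)
    (hG : G = κ * ((2 * z + x₀ + x₁) * (2 * z + x₁ + x₂)) / (2 * z * D))
    (ht₀ : t₀ = t₁ - 1 + β * (x₁ - x₀)) (ht₂ : t₂ = t₁ + 1 - β * (x₂ - x₁))
    (hb : t₁ ^ 2 - α ^ 2 = b * D)
    (hx : (z + x₁) ^ 2 - 1 = κ * b * ((2 * z + x₀ + x₁) * (2 * z + x₁ + x₂))) :
    x₁ = G * (1 / 4 - α ^ 2)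
      + ((κ / 4 + κ * (x₁ + x₂) / (8 * z)
          + (β * (1 - β * (x₂ - x₁)) / 4 * G + β / 2 * (G * t₁))) * x₀
        + (κ / 2 + κ * (x₁ + x₂) / (8 * z) - x₁ / (2 * z)
          + ((β / 4 - β * (1 - β * (x₂ - x₁)) / 4) * G - β * (G * t₁))) * x₁
        + (κ / 4 + (-(β / 4) * G + β / 2 * (G * t₁))) * x₂) := by
  have hdefect : (b - 1 / 4) * D = 1 / 4 - α ^ 2 - β * (1 - β * (x₂ - x₁)) * (x₁ - x₀) / 4
      - β * (x₂ - x₁) / 4 + β * t₁ * (x₂ - 2 * x₁ + x₀) / 2 := by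
    rw [sub_mul, ← hb, hD, ht₀, ht₂]
    ring
  have hsource : G * ((b - 1 / 4) * D)
      = κ * (b - 1 / 4) * ((2 * z + x₀ + x₁) * (2 * z + x₁ + x₂)) / (2 * z) := by
    rw [hG]
    field_simp
  rw [hdefect] at hsource
  field_simp at hsource ⊢
  linear_combination 32 * hx - 32 * hz - 8 * hsource

variable {Z τ b : ℕ → ℝ} {α β γ κ z K : ℝ}

lemma tendsto_natCast_add_two : Tendsto (fun n : ℕ => (n : ℝ) + 2) atTop atTop :=
  tendsto_atTop_add_const_right _ _ tendsto_natCast_atTop_atTop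

lemma tendsto_natCast_add_two_div (a : ℝ) :
    Tendsto (fun n : ℕ => ((n : ℝ) + 2) / (n + a)) atTop (𝓝 1) := by
  simpa only [one_mul, add_comm, div_one] using
    tendsto_add_mul_div_add_mul_atTop_nhds 2 a (1 : ℝ) one_ne_zero

lemma tendsto_add_div_natCast_add_two (hZK : ∀ n, |Z n| ≤ K)
    (hτ : ∀ n, τ n = n + 1 + γ - β * Z n) (j : ℕ) :
    Tendsto (fun n => τ (n + j) / (n + 2)) atTop (𝓝 1) := by
  refine tendsto_div_of_isBigO_sub tendsto_natCast_add_two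
    (.of_bound (|j - 1 + γ| + |β| * K) (.of_forall fun n => ?_))
  have hsub : τ (n + j) - (n + 2) = (j - 1 + γ) - β * Z (n + j) := by
    rw [hτ]
    push_cast
    ring
  rw [hsub, Pi.one_apply, norm_one, mul_one, Real.norm_eq_abs]
  refine (abs_sub _ _).trans ?_
  rw [abs_mul]
  gcongr
  exact hZK _

lemma tendsto_add_mul_add_div_natCast_sq (hZK : ∀ n, |Z n| ≤ K)
    (hτ : ∀ n, τ n = n + 1 + γ - β * Z n) :
    Tendsto (fun n : ℕ => (τ n + τ (n + 1)) * (τ (n + 1) + τ (n + 2)) / ((n : ℝ) + 2) ^ 2)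
      atTop (𝓝 4) :=
  tendsto_add_mul_add_div_sq tendsto_natCast_add_two (tendsto_add_div_natCast_add_two hZK hτ 0)
    (tendsto_add_div_natCast_add_two hZK hτ 1) (tendsto_add_div_natCast_add_two hZK hτ 2)

lemma tendsto_sq_mul_couplingFactor (hz0 : z ≠ 0) (hZK : ∀ n, |Z n| ≤ K)
    (hZz : Tendsto Z atTop (𝓝 z)) (hτ : ∀ n, τ n = n + 1 + γ - β * Z n) :
    Tendsto (fun n : ℕ => ((n : ℝ) + 2) ^ 2 * couplingFactor κ z Z τ n) atTop
      (𝓝 (κ * z / 2)) := by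
  have hZz₁ := (tendsto_add_atTop_iff_nat 1).2 hZz
  have hZz₂ := (tendsto_add_atTop_iff_nat 2).2 hZz
  have hnum := ((hZz.add hZz₁).mul (hZz₁.add hZz₂)).const_mul κ
  have hden := (tendsto_add_mul_add_div_natCast_sq hZK hτ).const_mul (2 * z)
  refine ((hnum.div hden (by positivity)).congr fun n => ?_).trans_eq (congrArg 𝓝 ?_)
  · have : (n : ℝ) + 2 ≠ 0 := by positivity
    simp only [Pi.div_apply, couplingFactor]
    field_simp
  · field_simp
    ring

lemma tendsto_linearization_variables (κ : ℝ) (hz0 : z ≠ 0) (hZK : ∀ n, |Z n| ≤ K)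
    (hZz : Tendsto Z atTop (𝓝 z)) (hτ : ∀ n, τ n = n + 1 + γ - β * Z n) :
    Tendsto (fun n => (Z (n + 1) - z, Z (n + 2) - z, couplingFactor κ z Z τ n,
      couplingFactor κ z Z τ n * τ (n + 1))) atTop (𝓝 (0, 0, 0, 0)) := by
  have hx : Tendsto (fun n => Z n - z) atTop (𝓝 0) := tendsto_sub_nhds_zero_iff.2 hZz
  have hsq := tendsto_sq_mul_couplingFactor (κ := κ) hz0 hZK hZz hτ
  have hG : Tendsto (couplingFactor κ z Z τ) atTop (𝓝 0) :=
    (hsq.div_atTop ((tendsto_pow_atTop two_ne_zero).comp tendsto_natCast_add_two)).congr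
      fun n => mul_div_cancel_left₀ _ (by positivity)
  have hGτ : Tendsto (fun n => couplingFactor κ z Z τ n * τ (n + 1)) atTop (𝓝 0) :=
    ((hsq.mul (tendsto_add_div_natCast_add_two hZK hτ 1)).div_atTop
      tendsto_natCast_add_two).congr fun n => by field_simp
  exact ((tendsto_add_atTop_iff_nat 1).2 hx).prodMk_nhds
    (((tendsto_add_atTop_iff_nat 2).2 hx).prodMk_nhds (hG.prodMk_nhds hGτ))

lemma exists_tendsto_sq_mul_sub (hκ0 : 0 ≤ κ) (hκ1 : κ < 1) (hz0 : z ≠ 0)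
    (hz : (1 - κ) * z ^ 2 = 1) (hZK : ∀ n, |Z n| ≤ K) (hZz : Tendsto Z atTop (𝓝 z))
    (hτ : ∀ n, τ n = n + 1 + γ - β * Z n)
    (hτb : ∀ n, τ (n + 1) ^ 2 - α ^ 2
      = b n * ((τ n + τ (n + 1)) * (τ (n + 1) + τ (n + 2))))
    (hZb : ∀ n, Z (n + 1) ^ 2 - 1
      = κ * b n * ((Z n + Z (n + 1)) * (Z (n + 1) + Z (n + 2)))) :
    ∃ e, Tendsto (fun n : ℕ => ((n : ℝ) + 1) ^ 2 * (Z n - z)) atTop (𝓝 e) := by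
  set x := fun n => Z n - z with hx
  set G := couplingFactor κ z Z τ
  have hcoeff {F : ℝ × ℝ × ℝ × ℝ → ℝ} (hF : Continuous F) : Tendsto
      (fun n => F (x (n + 1), x (n + 2), G n, G n * τ (n + 1))) atTop (𝓝 (F (0, 0, 0, 0))) :=
    (hF.tendsto _).comp (tendsto_linearization_variables κ hz0 hZK hZz hτ)
  refine ⟨_, tendsto_mul_of_three_term (ω := fun n : ℕ => ((n : ℝ) + 1) ^ 2)
    (A := fun n => G n * (1 / 4 - α ^ 2)) (l := κ * z / 2 * (1 / 4 - α ^ 2)) (K := K + |z|)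
    (fun n => by positivity) ?_ (fun n => (abs_sub _ _).trans (by gcongr; exact hZK n)) ?_
    (hcoeff (F := fun p => κ / 4 + κ * (p.1 + p.2.1) / (8 * z)
      + (β * (1 - β * (p.2.1 - p.1)) / 4 * p.2.2.1 + β / 2 * p.2.2.2)) (by fun_prop))
    (hcoeff (F := fun p => κ / 2 + κ * (p.1 + p.2.1) / (8 * z) - p.1 / (2 * z)
      + ((β / 4 - β * (1 - β * (p.2.1 - p.1)) / 4) * p.2.2.1 - β * p.2.2.2)) (by fun_prop))
    (hcoeff (F := fun p => κ / 4 + (-(β / 4) * p.2.2.1 + β / 2 * p.2.2.2)) (by fun_prop))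
    ?_ ?_⟩
  · simpa only [Nat.cast_add_one, add_assoc, one_add_one_eq_two, div_pow, one_pow] using
      (tendsto_natCast_add_two_div 1).pow 2
  · simpa only [Nat.cast_add_one, add_assoc, one_add_one_eq_two, mul_assoc] using
      (tendsto_sq_mul_couplingFactor hz0 hZK hZz hτ).mul_const (1 / 4 - α ^ 2)
  · simp only [add_zero, sub_zero, mul_zero, zero_div, abs_of_nonneg (div_nonneg hκ0 four_pos.le),
      abs_of_nonneg (div_nonneg hκ0 two_pos.le)]
    linarith
  · filter_upwards [(tendsto_add_mul_add_div_natCast_sq hZK hτ).eventually_ne four_ne_zero]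
      with n hn
    have hpair : ∀ m, 2 * z + x m + x (m + 1) = Z m + Z (m + 1) := fun m => by
      simp only [x]
      ring
    have hstep : ∀ m, τ (m + 1) = τ m + 1 - β * (x (m + 1) - x m) := fun m => by
      rw [hτ, hτ, hx]
      push_cast
      ring
    refine coupled_recurrence_linearization hz0 hz rfl (div_ne_zero_iff.1 hn).1 ?_ ?_
      (hstep (n + 1)) (hτb n) ?_
    · rw [hpair n, hpair (n + 1)]
      rfl
    · linarith [hstep n]
    · rw [hpair n, hpair (n + 1), add_sub_cancel]
      exact hZb n

lemma tendsto_sq_mul_sub_of_affine {e : ℝ} (hτ : ∀ n, τ n = n + 1 + γ - β * Z n)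
    (he : Tendsto (fun n : ℕ => ((n : ℝ) + 1) ^ 2 * (Z n - z)) atTop (𝓝 e)) (j : ℕ) :
    Tendsto (fun n : ℕ => ((n : ℝ) + 2) ^ 2 * (τ (n + j) - (n + 2 + (γ - β * z + (j - 1)))))
      atTop (𝓝 (-(β * e))) := by
  have hlim := (((tendsto_natCast_add_two_div (j + 1)).pow 2).mul
    ((tendsto_add_atTop_iff_nat j).2 he)).const_mul β |>.neg
  rw [one_pow, one_mul] at hlim
  refine hlim.congr fun n => ?_
  rw [hτ]
  push_cast
  field_simp
  ring

theorem tendsto_expansion_of_coupled_recurrence (hκ0 : 0 ≤ κ) (hκ1 : κ < 1)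
    (hZ0 : ∀ n, 0 ≤ Z n) (hZK : ∀ n, Z n ≤ K) (hτ : ∀ n, τ n = n + 1 + γ - β * Z n)
    (hτb : ∀ n, τ (n + 1) ^ 2 - α ^ 2
      = b n * ((τ n + τ (n + 1)) * (τ (n + 1) + τ (n + 2))))
    (hZb : ∀ n, Z (n + 1) ^ 2 - 1
      = κ * b n * ((Z n + Z (n + 1)) * (Z (n + 1) + Z (n + 2)))) :
    Tendsto b atTop (𝓝 (1 / 4)) ∧
      Tendsto (fun n : ℕ => ((n : ℝ) + 2) ^ 2 * (b n - 1 / 4)) atTop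
        (𝓝 ((1 - 4 * α ^ 2) / 16)) ∧
      Tendsto (fun n : ℕ => ((n : ℝ) + 2) ^ 3
          * (b n - 1 / 4 - (1 - 4 * α ^ 2) / (16 * ((n : ℝ) + 2) ^ 2))) atTop
        (𝓝 ((4 * α ^ 2 - 1) / 8 * (γ - β / √(1 - κ)))) := by
  have hZabs : ∀ n, |Z n| ≤ K := fun n => (abs_of_nonneg (hZ0 n)).trans_le (hZK n)
  have hτN := tendsto_add_div_natCast_add_two hZabs hτ
  have hb : Tendsto b atTop (𝓝 (1 / 4)) :=
    tendsto_quarter_of_sq_sub_sq_eq tendsto_natCast_add_two (hτN 0) (hτN 1) (hτN 2) hτb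
  have hκ : 0 < 1 - κ := sub_pos.2 hκ1
  set z := 1 / √(1 - κ) with hz
  have hZz : Tendsto Z atTop (𝓝 z) :=
    tendsto_one_div_sqrt_one_sub_of_sq_sub_one_eq hκ0 hκ1 hZ0 hZK
      ((hb.const_mul κ).trans_eq (congrArg 𝓝 (by ring))) hZb
  have hzsq : (1 - κ) * z ^ 2 = 1 := by
    rw [hz, div_pow, Real.sq_sqrt hκ.le, one_pow, mul_one_div_cancel hκ.ne']
  obtain ⟨e, he⟩ := exists_tendsto_sq_mul_sub hκ0 hκ1 (by positivity) hzsq hZabs hZz hτ hτb hZb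
  have hτsub (j : ℕ) {a : ℝ} (ha : a = γ - β * z + (j - 1)) :=
    ha ▸ tendsto_sq_mul_sub_of_affine hτ he j
  have hexpansion := tendsto_expansion_of_sq_sub_sq_eq (θ := γ - β * z) tendsto_natCast_add_two
    (hτsub 0 (by push_cast; ring)) (hτsub 1 (by push_cast; ring))
    (hτsub 2 (by push_cast; ring)) hτb
  rw [hz, mul_one_div] at hexpansion
  exact ⟨hb, hexpansion⟩

end CoupledRecurrence

/-- `P` is the sequence of monic orthogonal polynomials of the linear functional `L`, with squared
norms `h`. -/
structure IsMonicOrthogonal {R : Type*} [CommRing R] (L : R[X] →ₗ[R] R) (P : ℕ → R[X])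
    (h : ℕ → R) : Prop where
  monic (n : ℕ) : (P n).Monic
  natDegree_eq (n : ℕ) : (P n).natDegree = n
  map_mul (m n : ℕ) : L (P m * P n) = if m = n then h n else 0

/-- `V` is a Stieltjes functional of `L` at `c` with mass `μ`: formally, `V f = μ L (f / (c - X))`,
the division being well defined only up to a multiple of evaluation at `c`. -/
def IsStieltjes {R : Type*} [CommRing R] (L V : R[X] →ₗ[R] R) (c μ : R) : Prop :=
  ∀ f, V ((C c - X) * f) = μ * L f

/-- Twice the normalised off-diagonal entry `V (P (n + 1) * P n) / h n`, shifted by `μ` so that the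
identities relating consecutive entries for an `IsStieltjes` functional become symmetric. -/
noncomputable def stieltjesRatio {K : Type*} [Field K] (V : K[X] →ₗ[K] K) (P : ℕ → K[X])
    (h : ℕ → K) (μ : K) (n : ℕ) : K :=
  μ + 2 * V (P (n + 1) * P n) / h n

namespace IsMonicOrthogonal

section CommRing

variable {R : Type*} [CommRing R] {L V : R[X] →ₗ[R] R} {P : ℕ → R[X]} {h b : ℕ → R} {c μ : R}

lemma coeff_self (hP : IsMonicOrthogonal L P h) (n : ℕ) : (P n).coeff n = 1 := by
  simpa only [hP.natDegree_eq n] using (hP.monic n).coeff_natDegree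

lemma stieltjes_diag (hP : IsMonicOrthogonal L P h)
    (hrec : ∀ n, X * P (n + 1) = P (n + 2) + C (b (n + 1)) * P n)
    (hV : IsStieltjes L V c μ) (n : ℕ) :
    c * V (P (n + 1) * P (n + 1))
      = V (P (n + 2) * P (n + 1)) + b (n + 1) * V (P (n + 1) * P n) + μ * h (n + 1) := by
  have hexpand : c • (P (n + 1) * P (n + 1)) = P (n + 2) * P (n + 1)
      + b (n + 1) • (P (n + 1) * P n) + (C c - X) * (P (n + 1) * P (n + 1)) := by
    rw [smul_eq_C_mul, smul_eq_C_mul]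
    linear_combination P (n + 1) * hrec n
  rw [← smul_eq_mul, ← map_smul, hexpand, map_add, map_add, map_smul, hV, hP.map_mul, if_pos rfl,
    smul_eq_mul]

variable [Nontrivial R]

lemma map_mul_of_degree_lt (hP : IsMonicOrthogonal L P h) {n : ℕ} {f : R[X]}
    (hf : f.degree < n) : L (P n * f) = 0 := by
  let S : Polynomial.Sequence R :=
    ⟨P, fun i => by rw [degree_eq_natDegree (hP.monic i).ne_zero, hP.natDegree_eq]⟩
  have hf_span : f ∈ Submodule.span R (P '' Set.Iio n) := by
    have hspan := S.span_degreeLT (m := n) fun i _ => (hP.monic i).leadingCoeff ▸ isUnit_one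
    exact hspan ▸ mem_degreeLT.2 hf
  clear hf
  induction hf_span using Submodule.span_induction with
  | mem g hg =>
    obtain ⟨m, hm, rfl⟩ := hg
    rw [hP.map_mul, if_neg (Set.mem_Iio.1 hm).ne']
  | zero => rw [mul_zero, map_zero]
  | add g₁ g₂ _ _ h₁ h₂ => rw [mul_add, map_add, h₁, h₂, add_zero]
  | smul r g _ hg => rw [mul_smul_comm, map_smul, hg, smul_zero]

lemma map_mul_of_natDegree_le (hP : IsMonicOrthogonal L P h) {n : ℕ} {f : R[X]}
    (hf : f.natDegree ≤ n) : L (P n * f) = f.coeff n * h n := by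
  have hlt : (f - f.coeff n • P n).degree < n := by
    refine (degree_lt_iff_coeff_zero _ _).2 fun k hk => ?_
    rw [coeff_sub, coeff_smul, smul_eq_mul]
    rcases hk.eq_or_lt with rfl | hlt
    · rw [hP.coeff_self, mul_one, sub_self]
    · rw [coeff_eq_zero_of_natDegree_lt (hf.trans_lt hlt),
        coeff_eq_zero_of_natDegree_lt ((hP.natDegree_eq n).trans_lt hlt), mul_zero, sub_zero]
  have hsub := hP.map_mul_of_degree_lt hlt
  rwa [mul_sub, mul_smul_comm, map_sub, map_smul, hP.map_mul, if_pos rfl, smul_eq_mul,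
    sub_eq_zero] at hsub

lemma eq_of_map_mul_eq_zero [NoZeroDivisors R] (hP : IsMonicOrthogonal L P h)
    (hh : ∀ n, h n ≠ 0) {n : ℕ} {Q : R[X]} (hQ : Q.Monic) (hQn : Q.natDegree = n)
    (hQP : ∀ m < n, L (P m * Q) = 0) : Q = P n := by
  by_contra hne
  have hdeg : (Q - P n).natDegree < n := by
    refine (natDegree_lt_iff_degree_lt (sub_ne_zero.2 hne)).2 ?_
    have hQdeg : Q.degree = n := hQn ▸ degree_eq_natDegree hQ.ne_zero
    refine (degree_sub_lt_left ?_ hQ.ne_zero ?_).trans_eq hQdeg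
    · rw [hQdeg, degree_eq_natDegree (hP.monic n).ne_zero, hP.natDegree_eq]
    · rw [hQ.leadingCoeff, (hP.monic n).leadingCoeff]
  have hzero : L (P (Q - P n).natDegree * (Q - P n)) = 0 := by
    rw [mul_sub, map_sub, hQP _ hdeg, hP.map_mul, if_neg hdeg.ne, sub_zero]
  rw [hP.map_mul_of_natDegree_le le_rfl, coeff_natDegree] at hzero
  exact mul_ne_zero (leadingCoeff_ne_zero.2 (sub_ne_zero.2 hne)) (hh _) hzero

lemma comp_neg_X [NoZeroDivisors R] (hP : IsMonicOrthogonal L P h) (hh : ∀ n, h n ≠ 0)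
    (hL : ∀ f, L (f.comp (-X)) = L f) (n : ℕ) : (P n).comp (-X) = (-1) ^ n * P n := by
  have hsign : ((-1 : R[X]) ^ n) * (-1) ^ n = 1 := by rw [← mul_pow, neg_one_mul, neg_neg, one_pow]
  have hdeg : ∀ m, ((P m).comp (-X)).natDegree = m := fun m => by
    rw [natDegree_comp, natDegree_neg, natDegree_X, mul_one, hP.natDegree_eq]
  have hmonic : ((-1) ^ n * (P n).comp (-X)).Monic := by
    simpa only [hP.natDegree_eq n] using (hP.monic n).neg_one_pow_natDegree_mul_comp_neg_X
  have hunique : (-1) ^ n * (P n).comp (-X) = P n := by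
    refine hP.eq_of_map_mul_eq_zero hh hmonic ?_ fun m hm => ?_
    · rcases neg_one_pow_eq_or R[X] n with hn | hn <;> simp [hn, hdeg]
    · have hreflect : P m * ((-1) ^ n * (P n).comp (-X))
          = ((-1 : R) ^ n • (P n * (P m).comp (-X))).comp (-X) := by
        rw [smul_comp, mul_comp, comp_assoc, neg_comp, X_comp, neg_neg, comp_X, smul_eq_C_mul]
        simp only [map_pow, map_neg, map_one]
        ring
      have hlt : ((P m).comp (-X)).degree < n :=
        degree_le_natDegree.trans_lt (by rw [hdeg]; exact_mod_cast hm)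
      rw [hreflect, hL, map_smul, hP.map_mul_of_degree_lt hlt, smul_zero]
  linear_combination (-1) ^ n * hunique - (P n).comp (-X) * hsign

lemma norm_succ (hP : IsMonicOrthogonal L P h)
    (hrec : ∀ n, X * P (n + 1) = P (n + 2) + C (b (n + 1)) * P n) (n : ℕ) :
    h (n + 1) = b (n + 1) * h n := by
  have hdeg : (X * P n).natDegree ≤ n + 1 := by
    rw [natDegree_X_mul (hP.monic n).ne_zero, hP.natDegree_eq]
  have hexpand : P (n + 1) * (X * P n) = P (n + 2) * P n + b (n + 1) • (P n * P n) := by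
    rw [smul_eq_C_mul]
    linear_combination P n * hrec n
  calc h (n + 1) = L (P (n + 1) * (X * P n)) := by
        rw [hP.map_mul_of_natDegree_le hdeg, coeff_X_mul, hP.coeff_self, one_mul]
    _ = b (n + 1) * h n := by
        rw [hexpand, map_add, map_smul, hP.map_mul, hP.map_mul, if_neg (by lia), if_pos rfl,
          smul_eq_mul, zero_add]

lemma map_derivative_mul (hP : IsMonicOrthogonal L P h) (n : ℕ) :
    L (derivative (P (n + 1) * P n)) = (n + 1) * h n := by
  have hlow : (derivative (P n)).degree < (n + 1 : ℕ) := by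
    refine degree_derivative_le.trans_lt (degree_le_natDegree.trans_lt ?_)
    rw [hP.natDegree_eq]
    exact_mod_cast n.lt_succ_self
  have hhigh : (derivative (P (n + 1))).natDegree ≤ n :=
    (natDegree_derivative_le _).trans_eq (by rw [hP.natDegree_eq, Nat.add_sub_cancel])
  rw [derivative_mul, map_add, hP.map_mul_of_degree_lt hlow, mul_comm,
    hP.map_mul_of_natDegree_le hhigh, coeff_derivative, hP.coeff_self]
  ring

-- Expand `f` around `c`: `V` sees only `f c`, up to `L (P n * (f - f c) / (X - c))`.
lemma stieltjes_mul (hP : IsMonicOrthogonal L P h) (hV : IsStieltjes L V c μ) {n : ℕ} {f : R[X]}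
    (hf : f.natDegree ≤ n + 1) :
    V (P n * f) = f.eval c * V (P n) - μ * (f.coeff (n + 1) * h n) := by
  set q := f /ₘ (X - C c)
  have hq : q.natDegree ≤ n := by
    rw [natDegree_divByMonic _ (monic_X_sub_C c), natDegree_X_sub_C]
    lia
  have hfq : f = C (f.eval c) + q * (X - C c) := by
    rw [mul_comm q, ← modByMonic_X_sub_C_eq_C_eval, modByMonic_add_div]
  have hcoeff : f.coeff (n + 1) = q.coeff n := by
    rw [hfq, coeff_add, coeff_C_succ, coeff_mul_X_sub_C,
      coeff_eq_zero_of_natDegree_lt (Nat.lt_succ_of_le hq), zero_mul, sub_zero, zero_add]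
  have hsplit : P n * f = f.eval c • P n - (C c - X) * (P n * q) := by
    rw [smul_eq_C_mul]
    linear_combination P n * hfq
  rw [hsplit, map_sub, map_smul, hV, hP.map_mul_of_natDegree_le hq, hcoeff, smul_eq_mul]

lemma stieltjes_offDiag_mul (hP : IsMonicOrthogonal L P h) (hV : IsStieltjes L V c μ) (n : ℕ) :
    V (P (n + 1) * P n) * (V (P (n + 1) * P n) + μ * h n)
      = V (P (n + 1) * P (n + 1)) * V (P n * P n) := by
  have of_le : ∀ {m k}, k ≤ m → V (P m * P k) = (P k).eval c * V (P m) := fun {m k} hkm => by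
    have hk : (P k).natDegree < m + 1 := by
      rw [hP.natDegree_eq]
      lia
    rw [hP.stieltjes_mul hV hk.le, coeff_eq_zero_of_natDegree_lt hk]
    ring
  have succ : V (P (n + 1) * P n) = (P (n + 1)).eval c * V (P n) - μ * h n := by
    rw [mul_comm, hP.stieltjes_mul hV (hP.natDegree_eq _).le, hP.coeff_self, one_mul]
  linear_combination V (P (n + 1) * P n) * succ
    + (P (n + 1)).eval c * V (P n) * of_le n.le_succ
    - V (P n * P n) * of_le (le_refl (n + 1))
    - (P (n + 1)).eval c * V (P (n + 1)) * of_le (le_refl n)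

end CommRing

section Field

variable {K : Type*} [Field K] {L V : K[X] →ₗ[K] K} {P : ℕ → K[X]} {h b : ℕ → K} {c μ : K}

lemma stieltjesRatio_add_succ (hP : IsMonicOrthogonal L P h) (hh : ∀ n, h n ≠ 0)
    (hrec : ∀ n, X * P (n + 1) = P (n + 2) + C (b (n + 1)) * P n)
    (hV : IsStieltjes L V c μ) (n : ℕ) :
    stieltjesRatio V P h μ n + stieltjesRatio V P h μ (n + 1)
      = 2 * c * (V (P (n + 1) * P (n + 1)) / h (n + 1)) := by
  have hdiag := hP.stieltjes_diag hrec hV n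
  have hn := hh n
  have hb : b (n + 1) = h (n + 1) / h n := eq_div_of_mul_eq hn (hP.norm_succ hrec n).symm
  have hn' := hh (n + 1)
  rw [hb] at hdiag
  unfold stieltjesRatio
  field_simp at hdiag ⊢
  linear_combination -2 * hdiag

lemma stieltjesRatio_recurrence (hP : IsMonicOrthogonal L P h) (hh : ∀ n, h n ≠ 0)
    (hrec : ∀ n, X * P (n + 1) = P (n + 2) + C (b (n + 1)) * P n)
    (hV : IsStieltjes L V c μ) (n : ℕ) :
    c ^ 2 * (stieltjesRatio V P h μ (n + 1) ^ 2 - μ ^ 2)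
      = b (n + 2) * (stieltjesRatio V P h μ n + stieltjesRatio V P h μ (n + 1))
        * (stieltjesRatio V P h μ (n + 1) + stieltjesRatio V P h μ (n + 2)) := by
  have hprod := hP.stieltjes_offDiag_mul hV (n + 1)
  have hn := hh (n + 1)
  have hn' := hh (n + 2)
  have hb : b (n + 2) = h (n + 2) / h (n + 1) :=
    eq_div_of_mul_eq hn (hP.norm_succ hrec (n + 1)).symm
  rw [hP.stieltjesRatio_add_succ hh hrec hV, hP.stieltjesRatio_add_succ hh hrec hV, hb]
  unfold stieltjesRatio
  field_simp
  linear_combination 4 * c ^ 2 * hprod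

end Field

section LinearOrderedField

variable {K : Type*} [Field K] [LinearOrder K] [IsStrictOrderedRing K] {L V : K[X] →ₗ[K] K}
  {P : ℕ → K[X]} {h b : ℕ → K} {c μ M : K}

lemma stieltjes_offDiag_nonneg (hP : IsMonicOrthogonal L P h) (hh : ∀ n, 0 < h n) (hμ : 0 < μ)
    (hV : IsStieltjes L V c μ) (hsq : ∀ f, 0 ≤ V (f * f)) (n : ℕ) :
    0 ≤ V (P (n + 1) * P n) := by
  have cauchy_schwarz : V (P (n + 1) * P n) * V (P (n + 1) * P n)
      ≤ V (P (n + 1) * P (n + 1)) * V (P n * P n) := by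
    have := LinearMap.BilinForm.apply_mul_apply_le_of_forall_zero_le
      ((LinearMap.mul K K[X]).compr₂ V) hsq (P (n + 1)) (P n)
    simpa only [LinearMap.compr₂_apply, LinearMap.mul_apply', mul_comm (P n)] using this
  have hmul : 0 ≤ μ * h n * V (P (n + 1) * P n) := by
    linarith [hP.stieltjes_offDiag_mul hV n]
  exact nonneg_of_mul_nonneg_right hmul (mul_pos hμ (hh n))

lemma le_stieltjesRatio (hP : IsMonicOrthogonal L P h) (hh : ∀ n, 0 < h n) (hμ : 0 < μ)
    (hV : IsStieltjes L V c μ) (hsq : ∀ f, 0 ≤ V (f * f)) (n : ℕ) :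
    μ ≤ stieltjesRatio V P h μ n :=
  le_add_of_nonneg_right <| div_nonneg
    (mul_nonneg zero_le_two (hP.stieltjes_offDiag_nonneg hh hμ hV hsq n)) (hh n).le

lemma stieltjesRatio_le (hP : IsMonicOrthogonal L P h) (hh : ∀ n, 0 < h n) (hμ : 0 < μ)
    (hrec : ∀ n, X * P (n + 1) = P (n + 2) + C (b (n + 1)) * P n)
    (hV : IsStieltjes L V c μ) (hsq : ∀ f, 0 ≤ V (f * f)) (hc : 0 ≤ c)
    (hle : ∀ f, V (f * f) ≤ M * L (f * f)) (n : ℕ) :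
    stieltjesRatio V P h μ n ≤ 2 * c * M := by
  have hdiag : V (P (n + 1) * P (n + 1)) / h (n + 1) ≤ M := by
    rw [div_le_iff₀ (hh _)]
    simpa only [hP.map_mul, if_true] using hle (P (n + 1))
  have hsum := hP.stieltjesRatio_add_succ (fun n => (hh n).ne') hrec hV n
  have hnext := hμ.le.trans (hP.le_stieltjesRatio hh hμ hV hsq (n + 1))
  linarith [mul_le_mul_of_nonneg_left hdiag (mul_nonneg zero_le_two hc)]

end LinearOrderedField

end IsMonicOrthogonal

section EndpointFunctional

variable {R : Type*} [CommRing R] {L M : R[X] →ₗ[R] R} {a : R} {f : R[X]}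

/-- If `L` satisfies the integration by parts formula
`L (((1 - X ^ 2) * g)') = M ((1 - X ^ 2) * g) + a * L (X * g)`, applying it to `(1 + X) * f` gives
this functional, which has the Stieltjes property at the endpoint `1`. -/
noncomputable def endpointFunctional (L M : R[X] →ₗ[R] R) (a : R) : R[X] →ₗ[R] R :=
  (L ∘ₗ derivative - M) ∘ₗ LinearMap.mulLeft R (1 + X) + a • L

lemma endpointFunctional_apply (L M : R[X] →ₗ[R] R) (a : R) (f : R[X]) :
    endpointFunctional L M a f = L (derivative ((1 + X) * f)) - M ((1 + X) * f) + a * L f :=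
  rfl

lemma isStieltjes_endpointFunctional
    (hLM : ∀ g, L (derivative ((1 - X ^ 2) * g)) = M ((1 - X ^ 2) * g) + a * L (X * g)) :
    IsStieltjes L (endpointFunctional L M a) 1 a := fun f => by
  have hfactor : (1 + X) * ((C 1 - X) * f) = (1 - X ^ 2) * f := by
    rw [C_1]
    ring
  rw [endpointFunctional_apply, hfactor, hLM, add_sub_cancel_left, ← mul_add, ← map_add, ← add_mul,
    C_1, add_sub_cancel, one_mul]

variable [NoZeroDivisors R] [CharZero R]

lemma map_eq_zero_of_comp_neg_X_eq_neg (hL : ∀ f, L (f.comp (-X)) = L f)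
    (hf : f.comp (-X) = -f) : L f = 0 := by
  rw [← self_eq_neg, ← map_neg, ← hf, hL]

lemma endpointFunctional_of_comp_neg_X_eq_neg (hL : ∀ f, L (f.comp (-X)) = L f)
    (hM : ∀ f, M (f.comp (-X)) = -M f) (hf : f.comp (-X) = -f) :
    endpointFunctional L M a f = L (derivative f) - M f := by
  have hXf : (X * f).comp (-X) = X * f := by rw [mul_comp, X_comp, hf, neg_mul_neg]
  have hderiv : (derivative (X * f)).comp (-X) = -derivative (X * f) := by
    have hcomp := derivative_comp (X * f) (-X)
    rw [hXf, derivative_neg, derivative_X, neg_one_mul] at hcomp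
    exact (neg_eq_iff_eq_neg.2 hcomp).symm
  have hMXf : M (X * f) = 0 := by rw [← self_eq_neg, ← hM, hXf]
  rw [endpointFunctional_apply, one_add_mul, derivative_add, map_add, map_add, hMXf,
    map_eq_zero_of_comp_neg_X_eq_neg hL hderiv, map_eq_zero_of_comp_neg_X_eq_neg hL hf]
  ring

end EndpointFunctional

section IntegralFunctional

variable {w : ℝ → ℝ} {a b c : ℝ}

/-- The functional `f ↦ ∫ x in a..b, f x * w x` on polynomials, for an integrable density `w`. -/
noncomputable def integralFunctional (hw : IntervalIntegrable w volume a b) : ℝ[X] →ₗ[ℝ] ℝ where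
  toFun f := ∫ x in a..b, f.eval x * w x
  map_add' f g := by
    simp only [eval_add, add_mul]
    exact intervalIntegral.integral_add (hw.continuousOn_mul f.continuousOn)
      (hw.continuousOn_mul g.continuousOn)
  map_smul' r f := by
    simp only [eval_smul, smul_eq_mul, mul_assoc, RingHom.id_apply]
    exact intervalIntegral.integral_const_mul r _

lemma integralFunctional_apply (hw : IntervalIntegrable w volume a b) (f : ℝ[X]) :
    integralFunctional hw f = ∫ x in a..b, f.eval x * w x :=
  rfl

lemma intervalIntegrable_div_sub (hw : IntervalIntegrable w volume a b) (hc : c ∉ Set.uIcc a b) :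
    IntervalIntegrable (fun x => w x / (c - x)) volume a b := by
  simp only [div_eq_mul_inv]
  refine hw.mul_continuousOn (ContinuousOn.inv₀ (by fun_prop) fun x hx hcx => hc ?_)
  rwa [sub_eq_zero.1 hcx]

/-- The functional `f ↦ ∫ x in a..b, f x * w x / (c - x)`, for `c` off the interval. -/
noncomputable def stieltjesFunctional (hw : IntervalIntegrable w volume a b)
    (hc : c ∉ Set.uIcc a b) : ℝ[X] →ₗ[ℝ] ℝ :=
  integralFunctional (intervalIntegrable_div_sub hw hc)

lemma stieltjesFunctional_apply (hw : IntervalIntegrable w volume a b) (hc : c ∉ Set.uIcc a b)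
    (f : ℝ[X]) : stieltjesFunctional hw hc f = ∫ x in a..b, f.eval x * (w x / (c - x)) :=
  rfl

lemma isStieltjes_stieltjesFunctional (hw : IntervalIntegrable w volume a b)
    (hc : c ∉ Set.uIcc a b) :
    IsStieltjes (integralFunctional hw) (stieltjesFunctional hw hc) c 1 := fun f => by
  rw [one_mul]
  refine intervalIntegral.integral_congr fun x hx => ?_
  have hcx : c - x ≠ 0 := fun h => hc (sub_eq_zero.1 h ▸ hx)
  simp only [eval_mul, eval_sub, eval_C, eval_X]
  field_simp

lemma integralFunctional_comp_neg_X (hw : IntervalIntegrable w volume (-a) a)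
    (heven : ∀ x, w (-x) = w x) (f : ℝ[X]) :
    integralFunctional hw (f.comp (-X)) = integralFunctional hw f := by
  have hreflect := intervalIntegral.integral_comp_neg (a := -a) (b := a) fun x => f.eval x * w x
  simpa only [integralFunctional_apply, eval_comp, eval_neg, eval_X, heven, neg_neg]
    using hreflect

lemma stieltjesFunctional_comp_neg_X (hw : IntervalIntegrable w volume (-a) a)
    (heven : ∀ x, w (-x) = w x) (hc : c ∉ Set.uIcc (-a) a) (hc' : -c ∉ Set.uIcc (-a) a)
    (f : ℝ[X]) :
    stieltjesFunctional hw hc (f.comp (-X)) = -stieltjesFunctional hw hc' f := by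
  have hreflect := intervalIntegral.integral_comp_neg (a := -a) (b := a)
    fun x => f.eval x * (w x / (c + x))
  rw [stieltjesFunctional_apply, stieltjesFunctional_apply, ← intervalIntegral.integral_neg]
  simpa only [eval_comp, eval_neg, eval_X, heven, neg_neg, ← sub_eq_add_neg, ← neg_add',
    div_neg, mul_neg] using hreflect

lemma stieltjesFunctional_mul_self_nonneg (hw : IntervalIntegrable w volume a b) (hab : a ≤ b)
    (hw0 : ∀ x ∈ Set.Icc a b, 0 ≤ w x) (hbc : b < c) (hc : c ∉ Set.uIcc a b) (f : ℝ[X]) :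
    0 ≤ stieltjesFunctional hw hc (f * f) :=
  intervalIntegral.integral_nonneg hab fun x hx => by
    rw [eval_mul]
    exact mul_nonneg (mul_self_nonneg _)
      (div_nonneg (hw0 x hx) (sub_nonneg.2 (hx.2.trans hbc.le)))

lemma stieltjesFunctional_mul_self_le (hw : IntervalIntegrable w volume a b) (hab : a ≤ b)
    (hw0 : ∀ x ∈ Set.Icc a b, 0 ≤ w x) (hbc : b < c) (hc : c ∉ Set.uIcc a b) (f : ℝ[X]) :
    stieltjesFunctional hw hc (f * f) ≤ (c - b)⁻¹ * integralFunctional hw (f * f) := by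
  rw [← smul_eq_mul (c - b)⁻¹, ← map_smul]
  refine intervalIntegral.integral_mono_on hab
    ((intervalIntegrable_div_sub hw hc).continuousOn_mul (f * f).continuousOn)
    (hw.continuousOn_mul ((c - b)⁻¹ • (f * f)).continuousOn) fun x hx => ?_
  calc (f * f).eval x * (w x / (c - x)) ≤ (f * f).eval x * (w x / (c - b)) := by
        rw [eval_mul]
        exact mul_le_mul_of_nonneg_left (div_le_div_of_nonneg_left (hw0 x hx) (sub_pos.2 hbc)
          (sub_le_sub_left hx.2 c)) (mul_self_nonneg _)
    _ = ((c - b)⁻¹ • (f * f)).eval x * w x := by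
        rw [eval_smul, smul_eq_mul]
        ring

end IntegralFunctional

section EllipticJacobiWeight

/-- The elliptic Jacobi weight `(1 - x ^ 2) ^ α * (1 - k2 * x ^ 2) ^ β`, where `k2` is the squared
modulus. -/
noncomputable def ellipticJacobiWeight (α β k2 x : ℝ) : ℝ :=
  (1 - x ^ 2) ^ α * (1 - k2 * x ^ 2) ^ β

variable {α β k2 c x : ℝ}

lemma ellipticJacobiWeight_neg (α β k2 x : ℝ) :
    ellipticJacobiWeight α β k2 (-x) = ellipticJacobiWeight α β k2 x := by
  rw [ellipticJacobiWeight, neg_sq, ellipticJacobiWeight]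

lemma one_sub_mul_sq_pos (hk2 : k2 < 1) (hx : x ∈ Set.Icc (-1) 1) : 0 < 1 - k2 * x ^ 2 := by
  have hx2 : x ^ 2 ≤ 1 := (sq_le_one_iff_abs_le_one x).2 (abs_le.2 hx)
  rcases hx2.eq_or_lt with h | h
  · rwa [h, mul_one, sub_pos]
  · nlinarith [sq_nonneg x]

lemma ellipticJacobiWeight_nonneg (hk2 : k2 < 1) (hx : x ∈ Set.Icc (-1) 1) :
    0 ≤ ellipticJacobiWeight α β k2 x :=
  mul_nonneg
    (Real.rpow_nonneg (sub_nonneg.2 ((sq_le_one_iff_abs_le_one x).2 (abs_le.2 hx))) _)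
    (Real.rpow_nonneg (one_sub_mul_sq_pos hk2 hx).le _)

lemma continuousOn_ellipticJacobiWeight (hα : 0 ≤ α) (hk2 : k2 < 1) :
    ContinuousOn (ellipticJacobiWeight α β k2) (Set.Icc (-1) 1) :=
  (ContinuousOn.rpow_const (by fun_prop) fun _ _ => Or.inr hα).mul
    (ContinuousOn.rpow_const (by fun_prop) fun _ hx => Or.inl (one_sub_mul_sq_pos hk2 hx).ne')

lemma hasDerivAt_ellipticJacobiWeight (hx : 1 - x ^ 2 ≠ 0) (hkx : 1 - k2 * x ^ 2 ≠ 0)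
    (hck : k2 * c ^ 2 = 1) :
    HasDerivAt (ellipticJacobiWeight (α + 1) β k2)
      (-(2 * (α + 1) * x + β * (1 - x ^ 2) * (1 / (c - x) + 1 / (-c - x)))
        * ellipticJacobiWeight α β k2 x) x := by
  have hfactor : 1 - k2 * x ^ 2 = k2 * ((c - x) * (c + x)) := by linear_combination -hck
  have hne := hkx
  rw [hfactor, mul_ne_zero_iff, mul_ne_zero_iff] at hne
  obtain ⟨hk2, hcx, hcx'⟩ := hne
  have hquad (k : ℝ) : HasDerivAt (fun x : ℝ => 1 - k * x ^ 2) (-(k * (2 * x))) x := by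
    simpa using ((hasDerivAt_pow 2 x).const_mul k).const_sub 1
  have hleft : HasDerivAt (fun x : ℝ => (1 - x ^ 2) ^ (α + 1))
      (-(2 * x) * (α + 1) * (1 - x ^ 2) ^ α) x := by
    simpa using (hquad 1).rpow_const (p := α + 1) (Or.inl (by simpa using hx))
  refine (hleft.mul ((hquad k2).rpow_const (p := β) (Or.inl hkx))).congr_deriv ?_
  have hlog : k2 * (2 * x) / (1 - k2 * x ^ 2) = 1 / (c - x) + 1 / (-c - x) := by
    rw [hfactor, ← neg_add', div_neg]
    field_simp
    ring
  rw [ellipticJacobiWeight, Real.rpow_add_one hx, Real.rpow_sub_one hkx]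
  linear_combination
    (-β * (1 - x ^ 2) ^ α * (1 - x ^ 2) * (1 - k2 * x ^ 2) ^ β) * hlog

lemma hasDerivAt_ellipticJacobiWeight_mul_eval (hx : 1 - x ^ 2 ≠ 0) (hkx : 1 - k2 * x ^ 2 ≠ 0)
    (hck : k2 * c ^ 2 = 1) (g : ℝ[X]) :
    HasDerivAt (fun x => ellipticJacobiWeight (α + 1) β k2 x * g.eval x)
      ((derivative ((1 - X ^ 2) * g)).eval x * ellipticJacobiWeight α β k2 x
        - (β * (((1 - X ^ 2) * g).eval x * (ellipticJacobiWeight α β k2 x / (c - x))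
            + ((1 - X ^ 2) * g).eval x * (ellipticJacobiWeight α β k2 x / (-c - x)))
          + 2 * α * ((X * g).eval x * ellipticJacobiWeight α β k2 x))) x := by
  refine ((hasDerivAt_ellipticJacobiWeight hx hkx hck).mul (g.hasDerivAt x)).congr_deriv ?_
  have hraise : ellipticJacobiWeight (α + 1) β k2 x
      = (1 - x ^ 2) * ellipticJacobiWeight α β k2 x := by
    rw [ellipticJacobiWeight, ellipticJacobiWeight, Real.rpow_add_one hx]
    ring
  simp only [hraise, derivative_mul, derivative_sub, derivative_one, derivative_X_sq, eval_mul,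
    eval_sub, eval_add, eval_one, eval_pow, eval_X, eval_C, eval_zero]
  ring

lemma integralFunctional_derivative_ellipticJacobiWeight (hα : -1 < α) (hk2 : k2 < 1)
    (hck : k2 * c ^ 2 = 1)
    (hw : IntervalIntegrable (ellipticJacobiWeight α β k2) volume (-1) 1)
    (hc : c ∉ Set.uIcc (-1) 1) (hc' : -c ∉ Set.uIcc (-1) 1) (g : ℝ[X]) :
    integralFunctional hw (derivative ((1 - X ^ 2) * g))
      = (β • (stieltjesFunctional hw hc + stieltjesFunctional hw hc')) ((1 - X ^ 2) * g)
        + 2 * α * integralFunctional hw (X * g) := by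
  have integrable {u : ℝ → ℝ} (hu : IntervalIntegrable u volume (-1) 1) (f : ℝ[X]) :
      IntervalIntegrable (fun x => f.eval x * u x) volume (-1) 1 :=
    hu.continuousOn_mul f.continuousOn
  have hderiv := integrable hw (derivative ((1 - X ^ 2) * g))
  have hpole := integrable (intervalIntegrable_div_sub hw hc) ((1 - X ^ 2) * g)
  have hpole' := integrable (intervalIntegrable_div_sub hw hc') ((1 - X ^ 2) * g)
  have hend := integrable hw (X * g)
  have hrest := ((hpole.add hpole').const_mul β).add (hend.const_mul (2 * α))
  have hquad (x : ℝ) (hx : x ∈ Set.Ioo (-1) 1) : 1 - x ^ 2 ≠ 0 :=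
    (sub_pos.2 ((sq_lt_one_iff_abs_lt_one x).2 (abs_lt.2 hx))).ne'
  have ftc := intervalIntegral.integral_eq_sub_of_hasDerivAt_of_le (by norm_num)
    ((continuousOn_ellipticJacobiWeight (neg_le_iff_add_nonneg.1 hα.le) hk2).mul g.continuousOn)
    (fun x hx => hasDerivAt_ellipticJacobiWeight_mul_eval (hquad x hx)
      (one_sub_mul_sq_pos hk2 (Set.Ioo_subset_Icc_self hx)).ne' hck g)
    (hderiv.sub hrest)
  have hboundary (x : ℝ) (hx : x ^ 2 = 1) : ellipticJacobiWeight (α + 1) β k2 x = 0 := by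
    rw [ellipticJacobiWeight, hx, sub_self, Real.zero_rpow (neg_lt_iff_pos_add.1 hα).ne', zero_mul]
  rw [intervalIntegral.integral_sub hderiv hrest, intervalIntegral.integral_add
      ((hpole.add hpole').const_mul β) (hend.const_mul (2 * α)),
    intervalIntegral.integral_const_mul, intervalIntegral.integral_const_mul,
    intervalIntegral.integral_add hpole hpole', Pi.mul_apply, Pi.mul_apply,
    hboundary 1 (one_pow 2), hboundary (-1) neg_one_sq, zero_mul, zero_mul, sub_self] at ftc
  exact sub_eq_zero.1 ftc

end EllipticJacobiWeight

section ParityReduction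

variable {K : Type*} [Field K] [CharZero K] {L S S' : K[X] →ₗ[K] K} {P : ℕ → K[X]} {h : ℕ → K}

lemma IsMonicOrthogonal.stieltjesRatio_endpointFunctional (hP : IsMonicOrthogonal L P h)
    (hh : ∀ n, h n ≠ 0) (hL : ∀ f, L (f.comp (-X)) = L f)
    (hS : ∀ f, S (f.comp (-X)) = -S' f) (α β : K) (n : ℕ) :
    stieltjesRatio (endpointFunctional L (β • (S + S')) (2 * α)) P h (2 * α) n
      = 2 * (n + 1 + (α + β) - β * stieltjesRatio S P h 1 n) := by
  have hS' (f : K[X]) : S' (f.comp (-X)) = -S f := by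
    rw [eq_neg_iff_add_eq_zero, add_comm, ← eq_neg_iff_add_eq_zero, ← hS, comp_assoc, neg_comp,
      X_comp, neg_neg, comp_X]
  have hM (f : K[X]) : (β • (S + S')) (f.comp (-X)) = -(β • (S + S')) f := by
    simp only [LinearMap.smul_apply, LinearMap.add_apply, hS, hS', smul_eq_mul]
    ring
  have hodd : (P (n + 1) * P n).comp (-X) = -(P (n + 1) * P n) := by
    have hsign : (-1 : K[X]) ^ (n + 1) * (-1) ^ n = -1 := by
      rw [pow_succ', mul_assoc, ← mul_pow, neg_one_mul, neg_one_mul, neg_neg, one_pow]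
    rw [mul_comp, hP.comp_neg_X hh hL, hP.comp_neg_X hh hL, mul_mul_mul_comm, hsign, neg_one_mul]
  have hSS' : S' (P (n + 1) * P n) = S (P (n + 1) * P n) := by
    rw [← neg_inj, ← hS, hodd, map_neg]
  have hn := hh n
  rw [stieltjesRatio, stieltjesRatio, endpointFunctional_of_comp_neg_X_eq_neg hL hM hodd,
    hP.map_derivative_mul, LinearMap.smul_apply, LinearMap.add_apply, hSS', smul_eq_mul]
  field_simp
  ring

end ParityReduction

section EllipticJacobiPolynomials

variable {α β k2 c : ℝ} {P : ℕ → ℝ[X]} {h b τ : ℕ → ℝ}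

lemma IsMonicOrthogonal.endpoint_recurrence_ellipticJacobiWeight (hα : -1 < α) (hk2 : k2 < 1)
    (hck : k2 * c ^ 2 = 1)
    {hw : IntervalIntegrable (ellipticJacobiWeight α β k2) volume (-1) 1}
    (hc : c ∉ Set.uIcc (-1) 1) (hc' : -c ∉ Set.uIcc (-1) 1)
    (hP : IsMonicOrthogonal (integralFunctional hw) P h) (hh : ∀ n, h n ≠ 0)
    (hrec : ∀ n, X * P (n + 1) = P (n + 2) + C (b (n + 1)) * P n)
    (hτ : ∀ n, τ n = n + 1 + (α + β) - β * stieltjesRatio (stieltjesFunctional hw hc) P h 1 n)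
    (n : ℕ) :
    τ (n + 1) ^ 2 - α ^ 2 = b (n + 2) * ((τ n + τ (n + 1)) * (τ (n + 1) + τ (n + 2))) := by
  have heven := ellipticJacobiWeight_neg α β k2
  have hV := isStieltjes_endpointFunctional
    (integralFunctional_derivative_ellipticJacobiWeight hα hk2 hck hw hc hc')
  have hratio := hP.stieltjesRatio_endpointFunctional hh (integralFunctional_comp_neg_X hw heven)
    (stieltjesFunctional_comp_neg_X hw heven hc hc') α β
  have hT := hP.stieltjesRatio_recurrence hh hrec hV n
  rw [hratio, hratio, hratio, ← hτ, ← hτ, ← hτ] at hT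
  linear_combination hT / 4

theorem IsMonicOrthogonal.tendsto_recurrence_ellipticJacobiWeight (hα : -1 < α)
    (hk2 : k2 ∈ Set.Ioo 0 1)
    {hw : IntervalIntegrable (ellipticJacobiWeight α β k2) volume (-1) 1}
    (hP : IsMonicOrthogonal (integralFunctional hw) P h) (hh : ∀ n, 0 < h n)
    (hrec : ∀ n, X * P (n + 1) = P (n + 2) + C (b (n + 1)) * P n) :
    Tendsto b atTop (𝓝 (1 / 4)) ∧
    Tendsto (fun n : ℕ => (n : ℝ) ^ 2 * (b n - 1 / 4)) atTop (𝓝 ((1 - 4 * α ^ 2) / 16)) ∧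
    Tendsto (fun n : ℕ => (n : ℝ) ^ 3 * (b n - 1 / 4 - (1 - 4 * α ^ 2) / (16 * (n : ℝ) ^ 2))) atTop
      (𝓝 ((4 * α ^ 2 - 1) / 8 * (α + β - β / √(1 - k2)))) := by
  obtain ⟨hk0, hk1⟩ := hk2
  set c := (√k2)⁻¹
  have hc1 : 1 < c :=
    one_lt_inv_iff₀.2 ⟨Real.sqrt_pos.2 hk0, (Real.sqrt_lt' one_pos).2 (by rwa [one_pow])⟩
  have hck : k2 * c ^ 2 = 1 := by rw [inv_pow, Real.sq_sqrt hk0.le, mul_inv_cancel₀ hk0.ne']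
  have hc : c ∉ Set.uIcc (-1) 1 := Set.notMem_uIcc_of_gt (by linarith) hc1
  have hc' : -c ∉ Set.uIcc (-1) 1 := Set.notMem_uIcc_of_lt (by linarith) (by linarith)
  have hS := isStieltjes_stieltjesFunctional hw hc
  have hweight (x : ℝ) (hx : x ∈ Set.Icc (-1) 1) : 0 ≤ ellipticJacobiWeight α β k2 x :=
    ellipticJacobiWeight_nonneg hk1 hx
  have hSsq := stieltjesFunctional_mul_self_nonneg hw (by norm_num) hweight hc1 hc
  have hSle := stieltjesFunctional_mul_self_le hw (by norm_num) hweight hc1 hc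
  have hh0 (n : ℕ) : h n ≠ 0 := (hh n).ne'
  set Z := stieltjesRatio (stieltjesFunctional hw hc) P h 1
  have hZ0 (n : ℕ) : 0 ≤ Z n := zero_le_one.trans (hP.le_stieltjesRatio hh one_pos hS hSsq n)
  have hZK := hP.stieltjesRatio_le hh one_pos hrec hS hSsq (zero_le_one.trans hc1.le) hSle
  have hZb (n : ℕ) :
      Z (n + 1) ^ 2 - 1 = k2 * b (n + 2) * ((Z n + Z (n + 1)) * (Z (n + 1) + Z (n + 2))) := by
    linear_combination k2 * hP.stieltjesRatio_recurrence hh0 hrec hS n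
      - (Z (n + 1) ^ 2 - 1) * hck
  have hτb := hP.endpoint_recurrence_ellipticJacobiWeight hα hk1 hck hc hc' hh0 hrec fun _ => rfl
  obtain ⟨hlim, hlim2, hlim3⟩ := tendsto_expansion_of_coupled_recurrence
    (b := fun n => b (n + 2)) hk0.le hk1 hZ0 hZK (fun _ => rfl) hτb hZb
  refine ⟨(tendsto_add_atTop_iff_nat 2).1 hlim, (tendsto_add_atTop_iff_nat 2).1 ?_,
    (tendsto_add_atTop_iff_nat 2).1 ?_⟩
  · simpa only [Nat.cast_add, Nat.cast_ofNat] using hlim2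
  · simpa only [Nat.cast_add, Nat.cast_ofNat] using hlim3

end EllipticJacobiPolynomials

/-- Large `n` asymptotics of the recurrence coefficients:
`β_n → 1/4`, `n²(β_n − 1/4) → (1−4α²)/16`, and
`n³(β_n − 1/4 − (1−4α²)/(16n²)) → ((4α²−1)/8)(α + β − β/√(1−k²))`. -/
theorem stmt_18
    (α β k2 : ℝ) (hα : -1 < α) (hk2 : k2 ∈ Set.Ioo (0:ℝ) 1)
    (w : ℝ → ℝ)
    (hw : ∀ x : ℝ, w x = (1 - x ^ 2) ^ α * (1 - k2 * x ^ 2) ^ β)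
    (P : ℕ → Polynomial ℝ)
    (hPmonic : ∀ n, (P n).Monic)
    (hPdeg : ∀ n, (P n).natDegree = n)
    (h : ℕ → ℝ) (hpos : ∀ n, 0 < h n)
    (horth : ∀ m n : ℕ,
      (∫ x in (-1:ℝ)..1, (P m).eval x * (P n).eval x * w x)
        = if m = n then h n else 0)
    (b : ℕ → ℝ) (hb0 : b 0 = 0)
    (hrec : ∀ n : ℕ, 1 ≤ n →
      Polynomial.X * P n = P (n + 1) + Polynomial.C (b n) * P (n - 1)) :
    Filter.Tendsto b Filter.atTop (nhds (1/4)) ∧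
    Filter.Tendsto (fun n : ℕ => (n:ℝ) ^ 2 * (b n - 1/4)) Filter.atTop
      (nhds ((1 - 4 * α ^ 2) / 16)) ∧
    Filter.Tendsto
      (fun n : ℕ => (n:ℝ) ^ 3 * (b n - 1/4 - (1 - 4 * α ^ 2) / (16 * (n:ℝ) ^ 2)))
      Filter.atTop
      (nhds ((4 * α ^ 2 - 1) / 8 * (α + β - β / Real.sqrt (1 - k2)))) := by
  obtain rfl : w = ellipticJacobiWeight α β k2 := funext hw
  have horth' (m n : ℕ) : ∫ x in (-1:ℝ)..1, (P m * P n).eval x * ellipticJacobiWeight α β k2 x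
      = if m = n then h n else 0 := by
    simpa only [eval_mul] using horth m n
  have hP0 : P 0 = 1 := (hPmonic 0).natDegree_eq_zero.1 (hPdeg 0)
  have hw_int : IntervalIntegrable (ellipticJacobiWeight α β k2) volume (-1) 1 := by
    refine intervalIntegral.intervalIntegrable_of_integral_ne_zero ?_
    simpa only [hP0, mul_one, eval_one, one_mul, if_true] using (horth' 0 0).trans_ne (hpos 0).ne'
  have hP : IsMonicOrthogonal (integralFunctional hw_int) P h := ⟨hPmonic, hPdeg, horth'⟩
  exact hP.tendsto_recurrence_ellipticJacobiWeight hα hk2 hpos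
    fun n => hrec (n + 1) n.succ_pos
end

section
/- Set b₀ := (α−β)/4 + 1/8 + β·(1−√(1−k²))/(2k²) and b₁ := (1−4α²)/16. Then as n → ∞ the coefficient p1(n) of x^{n−2} in P_n satisfies lim_{n→∞} (p1(n) + n/4) = b₀ and lim_{n→∞} n·(p1(n) + n/4 − b₀) = b₁. -/
open MeasureTheory

/-!
Testing the Pearson equation of the weight against `P (n + 2) * P (n + 1)` and against
`P (n + 1) * Q n`, where `Q n` is the monic orthogonal polynomial of `(1 - x²) w` (Christoffel's
formula), gives two relations. The first expresses `p1 (n + 2)` through the recurrence coefficient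
`b n = h (n + 1) / h n`; the second governs the ratios `P (n + 1) 1 / P n 1`, which are chain
sequence parameters for `b n`. In both, the factor `(1 - k² x²) ^ β` enters only through one matrix
entry `M n` of the resolvent `(1 - k J)⁻¹` of the Jacobi matrix `J`.

Boundedness of `M n` makes the chain parameters tend to `1 / 2`, so `b n → 1 / 4`. Hence `J` is
asymptotically the free Jacobi matrix, its resolvent is asymptotically the explicit free one, and
`M n` converges. Fed back into the two relations, this limit gives `b₀` and the `1 / n` term of the
chain parameters. The increments of `p1 (n)` are `-b n`, whose `1 / n²` term then gives `b₁` by the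
Stolz–Cesàro theorem.
-/

section OrthogonalPolynomials

open Polynomial

section Algebra

lemma coeff_succ_one_sub_X_sq_mul_derivative {R : Type*} [CommRing R] (p : R[X]) (m : ℕ) :
    ((1 - X ^ 2) * derivative p).coeff (m + 1) = (m + 2) * p.coeff (m + 2) - m * p.coeff m := by
  rw [sub_mul, coeff_sub, one_mul, coeff_derivative, coeff_X_pow_mul']
  rcases m with _ | m
  · norm_num [mul_comm]
  · rw [if_pos (by omega), show m + 1 + 1 - 2 = m by omega, coeff_derivative]
    push_cast
    ring

variable {K : Type*} [Field K]

lemma X_sq_sub_one_dvd [NeZero (2 : K)] {p : K[X]} (h_one : p.eval 1 = 0)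
    (h_neg_one : p.eval (-1) = 0) : X ^ 2 - 1 ∣ p := by
  have h_unit : IsUnit ((1 : K) - -1) := by
    simpa [one_add_one_eq_two] using NeZero.ne (2 : K)
  have h_factor : (X ^ 2 - 1 : K[X]) = (X - C 1) * (X - C (-1)) := by
    simp only [map_neg, map_one]
    ring
  rw [h_factor]
  exact (isCoprime_X_sub_C_of_isUnit_sub h_unit).mul_dvd (dvd_iff_isRoot.2 h_one)
    (dvd_iff_isRoot.2 h_neg_one)

lemma comp_neg_X_eq_neg_of_one_sub_X_sq_mul {R : K[X]}
    (hR : ((1 - X ^ 2) * R).comp (-X) = -((1 - X ^ 2) * R)) : R.comp (-X) = -R := by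
  have h_ne : (1 - X ^ 2 : K[X]) ≠ 0 := fun h_zero => by
    simpa [coeff_X_pow] using congrArg (coeff · 0) h_zero
  refine mul_left_cancel₀ h_ne ?_
  simpa using hR

/-- A functional on polynomials is even if it is invariant under the reflection `x ↦ -x`, like
integration against an even weight on a symmetric interval. -/
def IsEvenFunctional (Λ : K[X] →ₗ[K] K) : Prop :=
  ∀ p : K[X], Λ (p.comp (-X)) = Λ p

lemma IsEvenFunctional.apply_eq_zero [NeZero (2 : K)] {Λ : K[X] →ₗ[K] K}
    (hΛ : IsEvenFunctional Λ) {p : K[X]} (hp : p.comp (-X) = -p) : Λ p = 0 := by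
  have h_neg : -Λ p = Λ p := by rw [← map_neg, ← hp, hΛ]
  have h_two : 2 * Λ p = 0 := by linear_combination -h_neg
  exact (mul_eq_zero.1 h_two).resolve_left (NeZero.ne 2)

/-- The Pearson equation `((1 - x²) w)' = (-2 (α + 1) x + (1 - x²) ψ) w` tested against odd
polynomials, where `Λ` is integration against `w` and `Ψ` is integration against `ψ w`. Only the
odd part of `ψ` is visible to odd polynomials, so `Ψ` may be any functional agreeing with it
there. -/
def IsPearson (Λ Ψ : K[X] →ₗ[K] K) (α : K) : Prop :=
  ∀ R : K[X], R.comp (-X) = -R →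
    Λ ((1 - X ^ 2) * derivative R - C (2 * (α + 1)) * (X * R)) + Ψ ((1 - X ^ 2) * R) = 0

/-- `P` is the sequence of monic orthogonal polynomials of the functional `Λ`, and `h` its
sequence of squared norms. As usual for formal orthogonality, these are only required to be
nonzero. -/
structure IsMonicOPS (Λ : K[X] →ₗ[K] K) (P : ℕ → K[X]) (h : ℕ → K) : Prop where
  isMonicOfDegree (n : ℕ) : IsMonicOfDegree (P n) n
  norm_ne_zero (n : ℕ) : h n ≠ 0
  orth (m n : ℕ) : Λ (P m * P n) = if m = n then h n else 0

namespace IsMonicOPS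

variable {Λ : K[X] →ₗ[K] K} {P : ℕ → K[X]} {h : ℕ → K} (H : IsMonicOPS Λ P h)

include H

lemma natDegree_eq (n : ℕ) : (P n).natDegree = n :=
  (H.isMonicOfDegree n).natDegree_eq

lemma coeff_self (n : ℕ) : (P n).coeff n = 1 :=
  ((isMonicOfDegree_iff _ _).1 (H.isMonicOfDegree n)).2

lemma coeff_of_lt {m n : ℕ} (hmn : n < m) : (P n).coeff m = 0 :=
  coeff_eq_zero_of_natDegree_lt (by rwa [H.natDegree_eq])

lemma apply_mul_self (n : ℕ) : Λ (P n * P n) = h n := by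
  rw [H.orth, if_pos rfl]

lemma apply_mul_of_ne {m n : ℕ} (hmn : m ≠ n) : Λ (P m * P n) = 0 := by
  rw [H.orth, if_neg hmn]

lemma apply_mul_eq_zero {n : ℕ} {R : K[X]} (hR : R.degree < n) : Λ (P n * R) = 0 := by
  let S : Polynomial.Sequence K :=
    ⟨P, fun i => by rw [degree_eq_natDegree (H.isMonicOfDegree i).ne_zero, H.natDegree_eq]⟩
  rw [← mem_degreeLT, ← S.span_degreeLT fun i _ => by
    simp [S, (H.isMonicOfDegree i).leadingCoeff_eq]] at hR
  have h_span : Submodule.span K (S '' Set.Iio n)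
      ≤ LinearMap.ker (Λ ∘ₗ LinearMap.mulLeft K (P n)) :=
    Submodule.span_le.2 <| by
      rintro _ ⟨j, hj, rfl⟩
      exact H.apply_mul_of_ne (Set.mem_Iio.1 hj).ne'
  exact h_span hR

lemma apply_mul {n : ℕ} {R : K[X]} (hR : R.natDegree ≤ n) : Λ (P n * R) = R.coeff n * h n := by
  have h_lower : (R - R.coeff n • P n).degree < n := by
    rw [degree_lt_iff_coeff_zero]
    intro m hm
    rcases hm.eq_or_lt with rfl | hm
    · simp [H.coeff_self]
    · simp [coeff_eq_zero_of_natDegree_lt (hR.trans_lt hm), H.coeff_of_lt hm]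
  have h_apply := H.apply_mul_eq_zero h_lower
  rw [mul_sub, mul_smul_comm, map_sub, map_smul, H.apply_mul_self, sub_eq_zero] at h_apply
  exact h_apply

lemma apply_mul_derivative {n : ℕ} {q : K[X]} (hq : IsMonicOfDegree q (n + 1)) :
    Λ (P n * derivative q) = (n + 1) * h n := by
  have h_deg : (derivative q).natDegree ≤ n := by
    simpa [hq.natDegree_eq] using natDegree_derivative_le q
  rw [H.apply_mul h_deg, coeff_derivative, ((isMonicOfDegree_iff _ _).1 hq).2, one_mul]

lemma apply_mul_X_mul {n : ℕ} {q : K[X]} (hq : IsMonicOfDegree q n) :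
    Λ (P (n + 1) * (X * q)) = h (n + 1) := by
  have h_monic : IsMonicOfDegree (X * q) (n + 1) := add_comm 1 n ▸ (isMonicOfDegree_X K).mul hq
  rw [isMonicOfDegree_iff] at h_monic
  rw [H.apply_mul h_monic.1, h_monic.2, one_mul]

lemma apply_mul_one_sub_X_sq_mul_derivative {n : ℕ} {q : K[X]} (hq : IsMonicOfDegree q n) :
    Λ (P (n + 1) * ((1 - X ^ 2) * derivative q)) = -n * h (n + 1) := by
  have hq_lt {m : ℕ} (hm : n < m) : q.coeff m = 0 :=
    coeff_eq_zero_of_natDegree_lt (hq.natDegree_eq.trans_lt hm)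
  have h_deg : ((1 - X ^ 2) * derivative q).natDegree ≤ n + 1 := by
    rw [natDegree_le_iff_coeff_eq_zero]
    rintro (_ | m) hm
    · omega
    · rw [coeff_succ_one_sub_X_sq_mul_derivative, hq_lt (by omega), hq_lt (by omega)]
      ring
  rw [H.apply_mul h_deg, coeff_succ_one_sub_X_sq_mul_derivative, hq_lt (by omega),
    ((isMonicOfDegree_iff _ _).1 hq).2]
  ring

lemma eq_of_orth {n : ℕ} {Q : K[X]} (hQ : IsMonicOfDegree Q n)
    (h_orth : ∀ j < n, Λ (P j * Q) = 0) : Q = P n := by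
  by_contra h_ne
  obtain rfl | hn := eq_or_ne n 0
  · exact h_ne ((isMonicOfDegree_zero_iff.1 hQ).trans
      (isMonicOfDegree_zero_iff.1 (H.isMonicOfDegree 0)).symm)
  have h_lt := hQ.natDegree_sub_lt hn (H.isMonicOfDegree n)
  have h_zero : Λ (P (Q - P n).natDegree * (Q - P n)) = 0 := by
    rw [mul_sub, map_sub, h_orth _ h_lt, H.apply_mul_of_ne h_lt.ne, sub_zero]
  rw [H.apply_mul le_rfl, mul_eq_zero, or_iff_left (H.norm_ne_zero _), coeff_natDegree,
    leadingCoeff_eq_zero, sub_eq_zero] at h_zero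
  exact h_ne h_zero

section Even

variable (hΛ : IsEvenFunctional Λ)

include hΛ

lemma comp_neg_X (n : ℕ) : (P n).comp (-X) = (-1) ^ n * P n := by
  have h_monic : IsMonicOfDegree ((-1) ^ n * (P n).comp (-X)) n := by
    refine ⟨?_, ?_⟩
    · rw [show (-1 : K[X]) ^ n = C ((-1) ^ n) by simp, natDegree_C_mul (by simp),
        natDegree_comp, natDegree_neg, natDegree_X, mul_one, H.natDegree_eq]
    · simpa only [H.natDegree_eq] using
        (H.isMonicOfDegree n).monic.neg_one_pow_natDegree_mul_comp_neg_X
  have h_orth (j : ℕ) (hj : j < n) : Λ (P j * ((-1) ^ n * (P n).comp (-X))) = 0 := by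
    have h_reflect : (P j * ((-1) ^ n * (P n).comp (-X))).comp (-X)
        = P n * (C ((-1) ^ n) * (P j).comp (-X)) := by
      simp only [mul_comp, pow_comp, neg_comp, one_comp, comp_neg_X_comp_neg_X, map_pow, map_neg,
        map_one]
      ring
    rw [← hΛ, h_reflect]
    refine H.apply_mul_eq_zero ?_
    rw [degree_C_mul (by simp), degree_comp_neg_X,
      degree_eq_natDegree (H.isMonicOfDegree j).ne_zero, H.natDegree_eq]
    exact_mod_cast hj
  conv_rhs => rw [← H.eq_of_orth h_monic h_orth, ← mul_assoc, ← mul_pow]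
  simp

lemma mul_comp_neg_X_of_odd {m n : ℕ} (hmn : Odd (m + n)) :
    (P m * P n).comp (-X) = -(P m * P n) := by
  rw [mul_comp, H.comp_neg_X hΛ, H.comp_neg_X hΛ, mul_mul_mul_comm, ← pow_add, hmn.neg_one_pow,
    neg_one_mul]

lemma eval_neg_one (n : ℕ) : (P n).eval (-1) = (-1) ^ n * (P n).eval 1 := by
  simpa [eval_comp] using congrArg (eval 1) (H.comp_neg_X hΛ n)

variable [NeZero (2 : K)]

lemma coeff_succ_self (n : ℕ) : (P (n + 1)).coeff n = 0 := by
  have h_coeff := congrArg (coeff · n) (H.comp_neg_X hΛ (n + 1))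
  rw [show (-X : K[X]) = C (-1) * X by simp,
    show (-1 : K[X]) ^ (n + 1) = C ((-1) ^ (n + 1)) by simp] at h_coeff
  simp only [comp_C_mul_X_coeff, coeff_C_mul, pow_succ] at h_coeff
  have h_two : 2 * (-1) ^ n * (P (n + 1)).coeff n = 0 := by linear_combination h_coeff
  exact (mul_eq_zero.1 h_two).resolve_left
    (mul_ne_zero (NeZero.ne 2) (pow_ne_zero _ (by simp)))

lemma recurrence (n : ℕ) : P (n + 2) = X * P (n + 1) - C (h (n + 1) / h n) * P n := by
  have h_monic : IsMonicOfDegree (X * P (n + 1) - C (h (n + 1) / h n) * P n) (n + 2) := by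
    refine (add_comm 1 (n + 1) ▸ (isMonicOfDegree_X K).mul (H.isMonicOfDegree (n + 1))).sub ?_
    exact (natDegree_C_mul_le _ _).trans_lt (by rw [H.natDegree_eq]; omega)
  refine (H.eq_of_orth h_monic fun j hj => ?_).symm
  have h_expand : P j * (X * P (n + 1) - C (h (n + 1) / h n) * P n)
      = P (n + 1) * (X * P j) - (h (n + 1) / h n) • (P j * P n) := by
    rw [smul_eq_C_mul]
    ring
  rw [h_expand, map_sub, map_smul, smul_eq_mul]
  obtain hj_lt | rfl | rfl : j < n ∨ j = n ∨ j = n + 1 := by omega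
  · have h_deg : (X * P j).degree < ((n + 1 : ℕ) : WithBot ℕ) := by
      rw [degree_mul, degree_X, degree_eq_natDegree (H.isMonicOfDegree j).ne_zero, H.natDegree_eq]
      exact_mod_cast (by omega : 1 + j < n + 1)
    rw [H.apply_mul_eq_zero h_deg, H.apply_mul_of_ne hj_lt.ne, mul_zero, sub_zero]
  · rw [H.apply_mul_X_mul (H.isMonicOfDegree j), H.apply_mul_self,
      div_mul_cancel₀ _ (H.norm_ne_zero j), sub_self]
  · have h_odd : (P (n + 1) * (X * P (n + 1))).comp (-X) = -(P (n + 1) * (X * P (n + 1))) := by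
      rw [mul_left_comm, mul_comp, X_comp, mul_comp, H.comp_neg_X hΛ, mul_mul_mul_comm, ← mul_pow]
      simp
    rw [hΛ.apply_eq_zero h_odd, H.apply_mul_of_ne n.succ_ne_self, mul_zero, sub_zero]

lemma coeff_recurrence (n : ℕ) :
    (P (n + 3)).coeff (n + 1) = (P (n + 2)).coeff n - h (n + 2) / h (n + 1) := by
  rw [H.recurrence hΛ (n + 1)]
  simp [H.coeff_self]

lemma apply_mul_one_sub_X_sq_mul_derivative_succ (n : ℕ) :
    Λ (P (n + 1) * ((1 - X ^ 2) * derivative (P (n + 2))))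
      = (n + 2 + 2 * (P (n + 2)).coeff n) * h (n + 1) - (n + 2) * h (n + 2) := by
  have h_coeff (m : ℕ) : ((1 - X ^ 2) * derivative (P (n + 2))
      + (n + 2 : K) • (X * P (n + 2))).coeff (m + 1)
        = (m + 2) * (P (n + 2)).coeff (m + 2) + (n + 2 - m) * (P (n + 2)).coeff m := by
    rw [coeff_add, coeff_smul, coeff_succ_one_sub_X_sq_mul_derivative, coeff_X_mul, smul_eq_mul]
    ring
  have h_deg : ((1 - X ^ 2) * derivative (P (n + 2))
      + (n + 2 : K) • (X * P (n + 2))).natDegree ≤ n + 1 := by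
    rw [natDegree_le_iff_coeff_eq_zero]
    intro m hm
    obtain ⟨m, rfl⟩ : ∃ l, m = l + 1 := ⟨m - 1, by omega⟩
    rw [h_coeff, H.coeff_of_lt (by omega)]
    obtain rfl | rfl | hm : m = n + 1 ∨ m = n + 2 ∨ n + 2 < m := by omega
    · rw [H.coeff_succ_self hΛ]
      ring
    · push_cast
      ring
    · rw [H.coeff_of_lt hm]
      ring
  have h_apply := H.apply_mul h_deg
  rw [mul_add, map_add, mul_smul_comm, map_smul, smul_eq_mul, mul_left_comm _ X, ← mul_assoc X,
    mul_comm (X * _), H.apply_mul_X_mul (H.isMonicOfDegree (n + 1)), h_coeff, H.coeff_self]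
    at h_apply
  linear_combination h_apply

lemma exists_christoffel (n : ℕ) (h_eval : (P n).eval 1 ≠ 0) :
    ∃ Q : K[X], IsMonicOfDegree Q n ∧
      (X ^ 2 - 1) * Q = P (n + 2) - C ((P (n + 2)).eval 1 / (P n).eval 1) * P n := by
  set γ := (P (n + 2)).eval 1 / (P n).eval 1 with hγ
  have h_one : (P (n + 2) - C γ * P n).eval 1 = 0 := by
    rw [eval_sub, eval_C_mul, hγ, div_mul_cancel₀ _ h_eval, sub_self]
  have h_neg_one : (P (n + 2) - C γ * P n).eval (-1) = 0 := by
    rw [eval_sub, eval_C_mul] at h_one ⊢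
    rw [H.eval_neg_one hΛ, H.eval_neg_one hΛ]
    linear_combination (-1) ^ n * h_one
  have h_quadratic : IsMonicOfDegree (X ^ 2 - 1 : K[X]) 2 := by
    simpa using (isMonicOfDegree_X_pow K 2).sub (q := C 1) (by simp)
  have h_monic : IsMonicOfDegree (P (n + 2) - C γ * P n) (n + 2) :=
    (H.isMonicOfDegree _).sub <|
      (natDegree_C_mul_le _ _).trans_lt (by rw [H.natDegree_eq]; omega)
  obtain ⟨Q, hQ⟩ := X_sq_sub_one_dvd h_one h_neg_one
  exact ⟨Q, h_quadratic.of_mul_left (by rwa [← hQ, add_comm 2]), hQ.symm⟩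

variable {Ψ : K[X] →ₗ[K] K} {α : K} (hΨ : IsPearson Λ Ψ α)

include hΨ

lemma pearson_consecutive (n : ℕ) :
    (n + 2 + 2 * (P (n + 2)).coeff n) * h (n + 1) + Ψ ((1 - X ^ 2) * (P (n + 2) * P (n + 1)))
      = (2 * n + 5 + 2 * α) * h (n + 2) := by
  have h_pearson := hΨ _ (H.mul_comp_neg_X_of_odd hΛ (m := n + 2) (n := n + 1) ⟨n + 1, by ring⟩)
  have h_expand : (1 - X ^ 2) * derivative (P (n + 2) * P (n + 1))
        - C (2 * (α + 1)) * (X * (P (n + 2) * P (n + 1)))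
      = P (n + 1) * ((1 - X ^ 2) * derivative (P (n + 2)))
        + P (n + 2) * ((1 - X ^ 2) * derivative (P (n + 1)))
        - (2 * (α + 1)) • (P (n + 2) * (X * P (n + 1))) := by
    rw [derivative_mul, smul_eq_C_mul]
    ring
  rw [h_expand, map_sub, map_add, map_smul, smul_eq_mul,
    H.apply_mul_one_sub_X_sq_mul_derivative_succ hΛ,
    H.apply_mul_one_sub_X_sq_mul_derivative (H.isMonicOfDegree (n + 1)),
    H.apply_mul_X_mul (H.isMonicOfDegree (n + 1))] at h_pearson
  push_cast at h_pearson
  linear_combination h_pearson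

lemma pearson_christoffel (n : ℕ) (h_eval : (P n).eval 1 ≠ 0) :
    (P (n + 2)).eval 1 * ((n + 1) * h n + Ψ (P (n + 1) * P n))
      = (P n).eval 1 * ((n + 2 + 2 * α) * h (n + 1) + Ψ (P (n + 2) * P (n + 1))) := by
  obtain ⟨Q, hQ_monic, hQ⟩ := H.exists_christoffel hΛ n h_eval
  set γ := (P (n + 2)).eval 1 / (P n).eval 1 with hγ
  have h_mul : (1 - X ^ 2) * (P (n + 1) * Q)
      = γ • (P (n + 1) * P n) - P (n + 2) * P (n + 1) := by
    rw [smul_eq_C_mul]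
    linear_combination -P (n + 1) * hQ
  have h_odd : (P (n + 1) * Q).comp (-X) = -(P (n + 1) * Q) := by
    refine comp_neg_X_eq_neg_of_one_sub_X_sq_mul ?_
    rw [h_mul, sub_comp, smul_comp, H.mul_comp_neg_X_of_odd hΛ ⟨n, by ring⟩,
      H.mul_comp_neg_X_of_odd hΛ ⟨n + 1, by ring⟩, smul_neg]
    ring
  have h_expand : (1 - X ^ 2) * derivative (P (n + 1) * Q)
        - C (2 * (α + 1)) * (X * (P (n + 1) * Q))
      = γ • (P n * derivative (P (n + 1))) - P (n + 2) * derivative (P (n + 1))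
        + P (n + 1) * ((1 - X ^ 2) * derivative Q)
        - (2 * (α + 1)) • (P (n + 1) * (X * Q)) := by
    rw [derivative_mul, smul_eq_C_mul, smul_eq_C_mul]
    linear_combination -derivative (P (n + 1)) * hQ
  have h_zero : Λ (P (n + 2) * derivative (P (n + 1))) = 0 := by
    refine H.apply_mul_eq_zero ((degree_derivative_le).trans_lt ?_)
    rw [degree_eq_natDegree (H.isMonicOfDegree _).ne_zero, H.natDegree_eq]
    exact_mod_cast Nat.lt_succ_self _
  have h_pearson := hΨ _ h_odd
  simp only [h_expand, h_mul, map_sub, map_add, map_smul, smul_eq_mul, h_zero,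
    H.apply_mul_derivative (H.isMonicOfDegree (n + 1)),
    H.apply_mul_one_sub_X_sq_mul_derivative hQ_monic, H.apply_mul_X_mul hQ_monic] at h_pearson
  rw [show (P (n + 2)).eval 1 = γ * (P n).eval 1 by rw [hγ, div_mul_cancel₀ _ h_eval]]
  linear_combination (P n).eval 1 * h_pearson

end Even
end IsMonicOPS
end Algebra

section Positive

/-- Positivity of a functional on the polynomials that are nonnegative on `s`, as for integration
against a nonnegative weight on `s`. -/
def IsPositiveOn (Λ : ℝ[X] →ₗ[ℝ] ℝ) (s : Set ℝ) : Prop :=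
  ∀ p : ℝ[X], (∀ x ∈ s, 0 ≤ p.eval x) → 0 ≤ Λ p

variable {Λ Φ Ψ : ℝ[X] →ₗ[ℝ] ℝ} {s : Set ℝ}

lemma IsPositiveOn.apply_mul_self_nonneg (hΛ : IsPositiveOn Λ s) (p : ℝ[X]) : 0 ≤ Λ (p * p) :=
  hΛ _ fun x _ => by rw [eval_mul]; exact mul_self_nonneg _

lemma IsPositiveOn.sq_apply_mul_le (hΛ : IsPositiveOn Λ s) (p q : ℝ[X]) :
    Λ (p * q) ^ 2 ≤ Λ (p * p) * Λ (q * q) :=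
  LinearMap.BilinForm.apply_sq_le_of_symm ((LinearMap.mul ℝ ℝ[X]).compr₂ Λ)
    hΛ.apply_mul_self_nonneg ⟨fun r t => congrArg Λ (mul_comm r t)⟩ p q

namespace IsMonicOPS

variable {P : ℕ → ℝ[X]} {h : ℕ → ℝ} (H : IsMonicOPS Λ P h)

include H

lemma norm_pos (hΛ : IsPositiveOn Λ s) (n : ℕ) : 0 < h n := by
  refine (H.norm_ne_zero n).symm.lt_of_le ?_
  rw [← H.apply_mul_self]
  exact hΛ.apply_mul_self_nonneg _

lemma eval_right_ne_zero {a b : ℝ} (hΛ : IsPositiveOn Λ (Set.Icc a b)) (n : ℕ) :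
    (P n).eval b ≠ 0 := by
  intro h_root
  obtain ⟨R, hR⟩ := dvd_iff_isRoot.2 h_root
  have hn : n ≠ 0 := by
    rintro rfl
    simp [isMonicOfDegree_zero_iff.1 (H.isMonicOfDegree 0)] at h_root
  have hR_monic : IsMonicOfDegree R (n - 1) := by
    refine (isMonicOfDegree_X_sub_one b).of_mul_left ?_
    rw [← hR, Nat.add_sub_cancel' (Nat.one_le_iff_ne_zero.2 hn)]
    exact H.isMonicOfDegree n
  have h_zero : Λ (P n * R) = 0 := by
    refine H.apply_mul_eq_zero ?_
    rw [degree_eq_natDegree hR_monic.ne_zero, hR_monic.natDegree_eq]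
    exact_mod_cast Nat.sub_one_lt hn
  have h_nonneg : 0 ≤ Λ ((a - b) • (P n * R) - P n * P n) := by
    refine hΛ _ fun x hx => ?_
    have h_eval : ((a - b) • (P n * R) - P n * P n).eval x
        = (b - x) * (x - a) * R.eval x ^ 2 := by
      simp only [hR, eval_sub, eval_smul, eval_mul, eval_X, eval_C, smul_eq_mul]
      ring
    rw [h_eval]
    have := sub_nonneg.2 hx.1
    have := sub_nonneg.2 hx.2
    positivity
  rw [map_sub, map_smul, h_zero, H.apply_mul_self, smul_zero, zero_sub] at h_nonneg
  linarith [H.norm_pos hΛ n]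

lemma norm_succ_le (hΛ : IsPositiveOn Λ (Set.Icc (-1) 1)) (n : ℕ) : h (n + 1) ≤ h n := by
  have h_nonneg : 0 ≤ Λ ((1 - X ^ 2) * (P n * P n)
      + (X * P n - P (n + 1)) * (X * P n - P (n + 1))) := by
    refine hΛ _ fun x hx => ?_
    have h_sq : 0 ≤ 1 - x ^ 2 := by nlinarith [hx.1, hx.2]
    simp only [eval_add, eval_mul, eval_sub, eval_one, eval_pow, eval_X]
    exact add_nonneg (mul_nonneg h_sq (mul_self_nonneg _)) (mul_self_nonneg _)
  have h_expand : (1 - X ^ 2) * (P n * P n) + (X * P n - P (n + 1)) * (X * P n - P (n + 1))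
      = P n * P n - (2 : ℝ) • (P (n + 1) * (X * P n)) + P (n + 1) * P (n + 1) := by
    rw [smul_eq_C_mul, C_ofNat]
    ring
  rw [h_expand, map_add, map_sub, map_smul, H.apply_mul_self, H.apply_mul_self,
    H.apply_mul_X_mul (H.isMonicOfDegree n), smul_eq_mul] at h_nonneg
  linarith

end IsMonicOPS

/-- The ratios `P (n + 1) 1 / P n 1` are the parameters of the chain sequence formed by the
recurrence coefficients; they equal `1 / 2` for Chebyshev polynomials of the first kind, and this
is twice their deviation from that value. -/
noncomputable def chainDeviation (P : ℕ → ℝ[X]) (n : ℕ) : ℝ :=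
  2 * ((P (n + 1)).eval 1 / (P n).eval 1) - 1

/-- The matrix entry of `Ψ` between the consecutive monic orthogonal polynomials `P (n + 1)` and
`P n`, normalized by the squared norm of the latter. -/
noncomputable def consecutiveEntry (Ψ : ℝ[X] →ₗ[ℝ] ℝ) (P : ℕ → ℝ[X]) (h : ℕ → ℝ) (n : ℕ) : ℝ :=
  Ψ (P (n + 1) * P n) / h n

lemma consecutiveEntry_smul (c : ℝ) (P : ℕ → ℝ[X]) (h : ℕ → ℝ) (n : ℕ) :
    consecutiveEntry (c • Ψ) P h n = c * consecutiveEntry Ψ P h n := by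
  rw [consecutiveEntry, consecutiveEntry, LinearMap.smul_apply, smul_eq_mul, mul_div_assoc]

namespace IsMonicOPS

variable {P : ℕ → ℝ[X]} {h : ℕ → ℝ} (H : IsMonicOPS Λ P h) (hΛ : IsEvenFunctional Λ)

include H hΛ

lemma norm_succ_div_norm (h_eval : ∀ m, (P m).eval 1 ≠ 0) (n : ℕ) :
    h (n + 1) / h n = (1 + chainDeviation P n) * (1 - chainDeviation P (n + 1)) / 4 := by
  have h_recurrence := congrArg (eval 1) (H.recurrence hΛ n)
  simp only [eval_sub, eval_mul, eval_X, eval_C, one_mul] at h_recurrence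
  have := h_eval n
  have := h_eval (n + 1)
  unfold chainDeviation
  rw [h_recurrence]
  field_simp
  ring

lemma chainDeviation_succ_mul {α : ℝ} (hΨ : IsPearson Λ Ψ α) (h_eval : ∀ m, (P m).eval 1 ≠ 0)
    (n : ℕ) :
    chainDeviation P (n + 1) * (2 * n + 2 + (1 + 2 * α) + consecutiveEntry Ψ P h n
          + consecutiveEntry Ψ P h (n + 1))
      = (1 + 2 * α) + consecutiveEntry Ψ P h (n + 1) - consecutiveEntry Ψ P h n := by
  have h_pearson := H.pearson_christoffel hΛ hΨ n (h_eval n)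
  have h_recurrence := congrArg (eval 1) (H.recurrence hΛ n)
  simp only [eval_sub, eval_mul, eval_X, eval_C, one_mul] at h_recurrence
  have := h_eval (n + 1)
  have := H.norm_ne_zero n
  have := H.norm_ne_zero (n + 1)
  unfold chainDeviation consecutiveEntry
  field_simp at h_recurrence ⊢
  linear_combination (2 * h (n + 1)) * h_pearson
    + 2 * ((n + 2 + 2 * α) * h (n + 1) + Ψ (P (n + 2) * P (n + 1))) * h_recurrence

end IsMonicOPS

/-- The orthonormal polynomials attached to the monic ones `P` with squared norms `h`. -/
noncomputable def orthonormalize (P : ℕ → ℝ[X]) (h : ℕ → ℝ) (n : ℕ) : ℝ[X] :=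
  (√(h n))⁻¹ • P n

/-- The off-diagonal entries of the Jacobi matrix, that is, of multiplication by `X` in the basis
of orthonormal polynomials. -/
noncomputable def jacobiCoeff (h : ℕ → ℝ) (n : ℕ) : ℝ :=
  √(h (n + 1) / h n)

namespace IsMonicOPS

variable {P : ℕ → ℝ[X]} {h : ℕ → ℝ} (H : IsMonicOPS Λ P h) (hΛ_pos : IsPositiveOn Λ s)

include H hΛ_pos

lemma apply_orthonormalize_mul (m n : ℕ) :
    Λ (orthonormalize P h m * orthonormalize P h n) = if m = n then 1 else 0 := by
  rw [orthonormalize, orthonormalize, smul_mul_smul_comm, map_smul, H.orth, smul_eq_mul]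
  split_ifs with hmn
  · rw [hmn, ← mul_inv, Real.mul_self_sqrt (H.norm_pos hΛ_pos n).le,
      inv_mul_cancel₀ (H.norm_ne_zero n)]
  · rw [mul_zero]

lemma consecutiveEntry_eq (n : ℕ) :
    consecutiveEntry Ψ P h n
      = jacobiCoeff h n * Ψ (orthonormalize P h (n + 1) * orthonormalize P h n) := by
  have := H.norm_pos hΛ_pos n
  have := H.norm_pos hΛ_pos (n + 1)
  rw [consecutiveEntry, jacobiCoeff, orthonormalize, orthonormalize, smul_mul_smul_comm, map_smul,
    smul_eq_mul, Real.sqrt_div' _ (by positivity)]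
  field_simp
  rw [Real.sq_sqrt (by positivity)]

lemma X_mul_orthonormalize (hΛ : IsEvenFunctional Λ) (n : ℕ) :
    X * orthonormalize P h (n + 1)
      = jacobiCoeff h (n + 1) • orthonormalize P h (n + 2)
        + jacobiCoeff h n • orthonormalize P h n := by
  have := H.norm_pos hΛ_pos n
  have := H.norm_pos hΛ_pos (n + 1)
  have := H.norm_pos hΛ_pos (n + 2)
  have h_up : jacobiCoeff h (n + 1) * (√(h (n + 2)))⁻¹ = (√(h (n + 1)))⁻¹ := by
    rw [jacobiCoeff, Real.sqrt_div' _ (by positivity)]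
    field_simp
  have h_down : jacobiCoeff h n * (√(h n))⁻¹ = (√(h (n + 1)))⁻¹ * (h (n + 1) / h n) := by
    rw [jacobiCoeff, Real.sqrt_div' _ (by positivity)]
    field_simp
    rw [Real.sq_sqrt (by positivity), Real.sq_sqrt (by positivity), mul_comm]
  rw [orthonormalize, orthonormalize, orthonormalize, smul_smul, smul_smul, h_up, h_down, mul_smul,
    H.recurrence hΛ, ← smul_add, ← smul_eq_C_mul, sub_add_cancel, mul_smul_comm]

end IsMonicOPS

/-- `Φ p = Λ ((1 - κ X)⁻¹ p)`: the entries of `Φ` in the orthonormal basis of `Λ` are those of the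
resolvent of the Jacobi matrix. -/
def IsResolvent (Φ Λ : ℝ[X] →ₗ[ℝ] ℝ) (κ : ℝ) : Prop :=
  ∀ p : ℝ[X], Φ ((1 - C κ * X) * p) = Λ p

namespace IsResolvent

variable {κ : ℝ} (hΦ : IsResolvent Φ Λ κ)

include hΦ

lemma apply_le (hΦ_pos : IsPositiveOn Φ (Set.Icc (-1) 1)) {p : ℝ[X]}
    (hp : ∀ x ∈ Set.Icc (-1 : ℝ) 1, 0 ≤ p.eval x) : (1 - |κ|) * Φ p ≤ Λ p := by
  have h_nonneg : 0 ≤ Φ ((1 - C κ * X) * p - (1 - |κ|) • p) := by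
    refine hΦ_pos _ fun x hx => ?_
    have h_le : κ * x ≤ |κ| :=
      (le_abs_self _).trans (by
        rw [abs_mul]
        exact mul_le_of_le_one_right (abs_nonneg κ) (abs_le.2 hx))
    have h_eval : ((1 - C κ * X) * p - (1 - |κ|) • p).eval x = (|κ| - κ * x) * p.eval x := by
      simp only [eval_sub, eval_mul, eval_one, eval_C, eval_X, eval_smul, smul_eq_mul]
      ring
    rw [h_eval]
    exact mul_nonneg (sub_nonneg.2 h_le) (hp x hx)
  rw [map_sub, map_smul, hΦ, smul_eq_mul] at h_nonneg
  linarith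

lemma apply_X_mul {p : ℝ[X]} : κ * Φ (X * p) = Φ p - Λ p := by
  rw [← hΦ p, ← smul_eq_mul, ← map_smul, smul_eq_C_mul, ← map_sub]
  congr 1
  ring

variable {P : ℕ → ℝ[X]} {h : ℕ → ℝ} (H : IsMonicOPS Λ P h)

include H

lemma abs_apply_orthonormalize_mul_le (hκ : |κ| < 1) (hΛ_pos : IsPositiveOn Λ s)
    (hΦ_pos : IsPositiveOn Φ (Set.Icc (-1) 1)) (m n : ℕ) :
    |Φ (orthonormalize P h m * orthonormalize P h n)| ≤ (1 - |κ|)⁻¹ := by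
  have h_self (l : ℕ) : Φ (orthonormalize P h l * orthonormalize P h l) ≤ (1 - |κ|)⁻¹ := by
    have h_le := hΦ.apply_le hΦ_pos (p := orthonormalize P h l * orthonormalize P h l)
      fun x _ => by rw [eval_mul]; exact mul_self_nonneg _
    rw [H.apply_orthonormalize_mul hΛ_pos, if_pos rfl] at h_le
    rwa [← one_div, le_div_iff₀' (sub_pos.2 hκ)]
  have h_bound_nonneg : 0 ≤ (1 - |κ|)⁻¹ := inv_nonneg.2 (sub_pos.2 hκ).le
  refine abs_le_of_sq_le_sq ?_ h_bound_nonneg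
  calc Φ (orthonormalize P h m * orthonormalize P h n) ^ 2
      ≤ Φ (orthonormalize P h m * orthonormalize P h m)
          * Φ (orthonormalize P h n * orthonormalize P h n) := hΦ_pos.sq_apply_mul_le _ _
    _ ≤ (1 - |κ|)⁻¹ * (1 - |κ|)⁻¹ :=
        mul_le_mul (h_self m) (h_self n) (hΦ_pos.apply_mul_self_nonneg _) h_bound_nonneg
    _ = (1 - |κ|)⁻¹ ^ 2 := (sq _).symm

lemma apply_orthonormalize_recurrence (hΛ : IsEvenFunctional Λ) (hΛ_pos : IsPositiveOn Λ s)
    (m n : ℕ) :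
    Φ (orthonormalize P h n * orthonormalize P h (m + 1))
      = (if n = m + 1 then 1 else 0)
        + κ * (jacobiCoeff h (m + 1) * Φ (orthonormalize P h n * orthonormalize P h (m + 2))
          + jacobiCoeff h m * Φ (orthonormalize P h n * orthonormalize P h m)) := by
  have h_shift := hΦ.apply_X_mul (p := orthonormalize P h n * orthonormalize P h (m + 1))
  rw [mul_left_comm, H.X_mul_orthonormalize hΛ_pos hΛ, mul_add, map_add, mul_smul_comm,
    mul_smul_comm, map_smul, map_smul, H.apply_orthonormalize_mul hΛ_pos, smul_eq_mul,
    smul_eq_mul] at h_shift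
  linear_combination -h_shift

end IsResolvent

end Positive

section Sequences

open Filter Topology

lemma tendstoUniformly_zero_of_contracting {ι E : Type*} [SeminormedAddCommGroup E]
    {F : ℕ → ι → E} {κ B : ℝ} {δ : ℕ → ℝ} (hκ_nonneg : 0 ≤ κ) (hκ : κ < 1)
    (h_bound : ∀ m i, ‖F m i‖ ≤ B) (hδ : Tendsto δ atTop (𝓝 0))
    (h_contract : ∀ m i, ‖F (m + 1) i‖ ≤ κ / 2 * (‖F (m + 2) i‖ + ‖F m i‖) + δ m) :
    TendstoUniformly F 0 atTop := by
  have hκ_sub : 0 < 1 - κ := sub_pos.2 hκ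
  have h_iterate {η : ℝ} (hη : 0 < η) (j : ℕ) :
      ∀ᶠ m in atTop, ∀ i, ‖F m i‖ ≤ κ ^ j * B + η / (1 - κ) := by
    induction j with
    | zero =>
      refine Eventually.of_forall fun m i => (h_bound m i).trans ?_
      rw [pow_zero, one_mul]
      exact le_add_of_nonneg_right (by positivity)
    | succ j h_ind =>
      rw [← map_add_atTop_eq_nat 1, eventually_map]
      filter_upwards [h_ind, (tendsto_add_atTop_nat 2).eventually h_ind, hδ.eventually_lt_const hη]
        with m h_left h_right hδ_lt i
      calc ‖F (m + 1) i‖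
          ≤ κ / 2 * (‖F (m + 2) i‖ + ‖F m i‖) + δ m := h_contract m i
        _ ≤ κ / 2 * ((κ ^ j * B + η / (1 - κ)) + (κ ^ j * B + η / (1 - κ))) + η := by
            gcongr
            exacts [h_right i, h_left i]
        _ = κ ^ (j + 1) * B + η / (1 - κ) := by
            field_simp
            ring
  refine Metric.tendstoUniformly_iff.2 fun ε hε => ?_
  have h_pow : Tendsto (fun j : ℕ => κ ^ j * B) atTop (𝓝 0) := by
    simpa using (tendsto_pow_atTop_nhds_zero_of_lt_one hκ_nonneg hκ).mul_const B
  obtain ⟨j, hj⟩ := (h_pow.eventually_lt_const (half_pos hε)).exists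
  filter_upwards [h_iterate (mul_pos hκ_sub (half_pos hε)) j] with m hm i
  rw [Pi.zero_apply, dist_zero_left]
  calc ‖F m i‖ ≤ κ ^ j * B + (1 - κ) * (ε / 2) / (1 - κ) := hm i
    _ = κ ^ j * B + ε / 2 := by rw [mul_div_cancel_left₀ _ hκ_sub.ne']
    _ < ε / 2 + ε / 2 := by gcongr
    _ = ε := add_halves ε

/-- The entry at distance `d` from the diagonal of the resolvent `(1 - κ J₀)⁻¹` of the free
two-sided Jacobi matrix `J₀`, whose off-diagonal entries are all `1 / 2`. -/
noncomputable def freeGreen (κ : ℝ) (d : ℤ) : ℝ :=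
  (√(1 - κ ^ 2))⁻¹ * (κ / (1 + √(1 - κ ^ 2))) ^ d.natAbs

section FreeGreen

variable {κ : ℝ}

lemma freeGreen_recurrence (hκ : |κ| < 1) (d : ℤ) :
    freeGreen κ d
      = (if d = 0 then 1 else 0) + κ / 2 * (freeGreen κ (d + 1) + freeGreen κ (d - 1)) := by
  have h_pos : 0 < 1 - κ ^ 2 := sub_pos.2 ((sq_lt_one_iff_abs_lt_one κ).2 hκ)
  have : 0 < √(1 - κ ^ 2) := Real.sqrt_pos.2 h_pos
  have h_sq : √(1 - κ ^ 2) ^ 2 = 1 - κ ^ 2 := Real.sq_sqrt h_pos.le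
  have h_root : κ / 2 * (1 + (κ / (1 + √(1 - κ ^ 2))) ^ 2) = κ / (1 + √(1 - κ ^ 2)) := by
    field_simp
    linear_combination κ * h_sq
  have h_diag : κ * (κ / (1 + √(1 - κ ^ 2))) = 1 - √(1 - κ ^ 2) := by
    field_simp
    linear_combination h_sq
  unfold freeGreen
  generalize κ / (1 + √(1 - κ ^ 2)) = r at h_root h_diag ⊢
  rcases lt_trichotomy d 0 with hd | rfl | hd
  · obtain ⟨n, rfl⟩ : ∃ n : ℕ, d = -(n + 1 : ℕ) := ⟨d.natAbs - 1, by omega⟩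
    rw [if_neg hd.ne, show (-((n + 1 : ℕ) : ℤ)).natAbs = n + 1 by omega,
      show (-((n + 1 : ℕ) : ℤ) + 1).natAbs = n by omega,
      show (-((n + 1 : ℕ) : ℤ) - 1).natAbs = n + 2 by omega]
    linear_combination -(√(1 - κ ^ 2))⁻¹ * r ^ n * h_root
  · simp only [if_true, zero_add, zero_sub, Int.natAbs_zero, Int.natAbs_neg, Int.natAbs_one,
      pow_zero, pow_one]
    field_simp
    linear_combination -2 * h_diag
  · obtain ⟨n, rfl⟩ : ∃ n : ℕ, d = (n + 1 : ℕ) := ⟨d.natAbs - 1, by omega⟩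
    rw [if_neg hd.ne', show ((n + 1 : ℕ) : ℤ).natAbs = n + 1 by omega,
      show (((n + 1 : ℕ) : ℤ) + 1).natAbs = n + 2 by omega,
      show (((n + 1 : ℕ) : ℤ) - 1).natAbs = n by omega]
    linear_combination -(√(1 - κ ^ 2))⁻¹ * r ^ n * h_root

lemma freeGreen_natCast_sub_recurrence (hκ : |κ| < 1) (m n : ℕ) :
    freeGreen κ (n - (m + 1 : ℕ))
      = (if n = m + 1 then 1 else 0)
        + κ / 2 * (freeGreen κ (n - (m + 2 : ℕ)) + freeGreen κ (n - m)) := by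
  rw [freeGreen_recurrence hκ, show (n : ℤ) - (m + 1 : ℕ) + 1 = n - m by push_cast; ring,
    show (n : ℤ) - (m + 1 : ℕ) - 1 = n - (m + 2 : ℕ) by push_cast; ring]
  simp only [sub_eq_zero, Nat.cast_inj]
  ring

lemma mul_freeGreen_one (hκ : |κ| < 1) :
    κ * (1 - κ ^ 2) * freeGreen κ 1 = √(1 - κ ^ 2) - (1 - κ ^ 2) := by
  have h_pos : 0 < 1 - κ ^ 2 := sub_pos.2 ((sq_lt_one_iff_abs_lt_one κ).2 hκ)
  have : 0 < √(1 - κ ^ 2) := Real.sqrt_pos.2 h_pos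
  have h_sq : √(1 - κ ^ 2) ^ 2 = 1 - κ ^ 2 := Real.sq_sqrt h_pos.le
  rw [freeGreen, Int.natAbs_one, pow_one]
  field_simp
  linear_combination -(κ ^ 2 + √(1 - κ ^ 2)) * h_sq

lemma abs_freeGreen_le (hκ : |κ| ≤ 1) (d : ℤ) : |freeGreen κ d| ≤ (√(1 - κ ^ 2))⁻¹ := by
  have h_sqrt : 0 ≤ √(1 - κ ^ 2) := Real.sqrt_nonneg _
  have h_ratio : |κ / (1 + √(1 - κ ^ 2))| ≤ 1 := by
    rw [abs_div, abs_of_pos (by positivity : 0 < 1 + √(1 - κ ^ 2))]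
    exact div_le_one_of_le₀ (by linarith) (by positivity)
  rw [freeGreen, abs_mul, abs_of_nonneg (inv_nonneg.2 h_sqrt), abs_pow]
  exact mul_le_of_le_one_right (inv_nonneg.2 h_sqrt) (pow_le_one₀ (abs_nonneg _) h_ratio)

lemma tendsto_of_resolvent_recurrence (hκ : |κ| < 1) {a : ℕ → ℝ} {ρ : ℕ → ℕ → ℝ} {B : ℝ}
    (ha : Tendsto a atTop (𝓝 (1 / 2))) (hρ_bound : ∀ n m, |ρ n m| ≤ B)
    (hρ : ∀ m n, ρ n (m + 1)
      = (if n = m + 1 then 1 else 0) + κ * (a (m + 1) * ρ n (m + 2) + a m * ρ n m)) (d : ℕ) :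
    Tendsto (fun m => ρ (m + d) m) atTop (𝓝 (freeGreen κ d)) := by
  let F (m n : ℕ) : ℝ := ρ n m - freeGreen κ (n - m)
  let δ (m : ℕ) : ℝ := |κ| * (|a (m + 1) - 1 / 2| * B + |a m - 1 / 2| * B)
  have hF_bound (m n : ℕ) : ‖F m n‖ ≤ B + (√(1 - κ ^ 2))⁻¹ :=
    (norm_sub_le _ _).trans (add_le_add (hρ_bound n m) (abs_freeGreen_le hκ.le _))
  have hδ : Tendsto δ atTop (𝓝 0) := by
    have ha_abs : Tendsto (fun m => |a m - 1 / 2| * B) atTop (𝓝 0) := by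
      simpa using (ha.sub_const (1 / 2)).abs.mul_const B
    simpa [δ] using (((tendsto_add_atTop_iff_nat 1).2 ha_abs).add ha_abs).const_mul |κ|
  have hF_succ (m n : ℕ) : F (m + 1) n = κ / 2 * (F (m + 2) n + F m n)
      + κ * ((a (m + 1) - 1 / 2) * ρ n (m + 2) + (a m - 1 / 2) * ρ n m) := by
    linear_combination hρ m n - freeGreen_natCast_sub_recurrence hκ m n
  have hF_contract (m n : ℕ) :
      ‖F (m + 1) n‖ ≤ |κ| / 2 * (‖F (m + 2) n‖ + ‖F m n‖) + δ m := by
    rw [hF_succ]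
    refine (norm_add_le _ _).trans (add_le_add ?_ ?_)
    · rw [norm_mul, norm_div, Real.norm_ofNat, Real.norm_eq_abs κ]
      gcongr
      exact norm_add_le _ _
    · rw [norm_mul]
      refine mul_le_mul_of_nonneg_left ((norm_add_le _ _).trans ?_) (norm_nonneg κ)
      rw [norm_mul, norm_mul]
      exact add_le_add (mul_le_mul_of_nonneg_left (hρ_bound _ _) (norm_nonneg _))
        (mul_le_mul_of_nonneg_left (hρ_bound _ _) (norm_nonneg _))
  have hF_zero := tendstoUniformly_zero_of_contracting (abs_nonneg κ) hκ hF_bound hδ hF_contract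
  have h_diff : Tendsto (fun m => F m (m + d)) atTop (𝓝 0) := by
    rw [Metric.tendstoUniformly_iff] at hF_zero
    exact Metric.tendsto_nhds.2 fun ε hε =>
      (hF_zero ε hε).mono fun m hm => by simpa [dist_comm] using hm (m + d)
  simpa [F] using h_diff.add_const (freeGreen κ d)

end FreeGreen

lemma eventually_sub_le_mul {t y : ℕ → ℝ} {L C : ℝ} (ht : Tendsto t atTop (𝓝 L))
    (hy : Tendsto y atTop (𝓝 0))
    (h_incr : ∀ᶠ n in atTop, t (n + 1) - t n ≤ C * (y n - y (n + 1))) :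
    ∀ᶠ n in atTop, L - t n ≤ C * y n := by
  obtain ⟨N, hN⟩ := eventually_atTop.1 h_incr
  have h_antitone : Antitone fun n => t (n + N) + C * y (n + N) :=
    antitone_nat_of_succ_le fun n => by
      have := hN (n + N) (Nat.le_add_left N n)
      rw [add_right_comm n 1 N]
      linarith
  have h_lim : Tendsto (fun n => t (n + N) + C * y (n + N)) atTop (𝓝 L) := by
    simpa using (tendsto_add_atTop_iff_nat N).2 (ht.add (hy.const_mul C))
  filter_upwards [eventually_ge_atTop N] with n hn
  have h_le := h_antitone.le_of_tendsto h_lim (n - N)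
  rw [Nat.sub_add_cancel hn] at h_le
  linarith

/-- The Stolz–Cesàro theorem in its `0 / 0` form. -/
lemma tendsto_div_of_tendsto_sub_div_sub {t y : ℕ → ℝ} {L D : ℝ} (ht : Tendsto t atTop (𝓝 L))
    (hy : Tendsto y atTop (𝓝 0)) (hy_anti : StrictAnti y)
    (h_incr : Tendsto (fun n => (t (n + 1) - t n) / (y n - y (n + 1))) atTop (𝓝 D)) :
    Tendsto (fun n => (L - t n) / y n) atTop (𝓝 D) := by
  have hy_sub (n : ℕ) : 0 < y n - y (n + 1) := sub_pos.2 (hy_anti n.lt_succ_self)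
  have hy_pos (n : ℕ) : 0 < y n :=
    (hy_anti.antitone.le_of_tendsto hy (n + 1)).trans_lt (hy_anti n.lt_succ_self)
  refine tendsto_order.2 ⟨fun c hc => ?_, fun c hc => ?_⟩
  · obtain ⟨c', hcc', hc'⟩ := exists_between hc
    have h_le : ∀ᶠ n in atTop, -L - -t n ≤ -c' * y n := by
      refine eventually_sub_le_mul ht.neg hy ?_
      filter_upwards [h_incr.eventually_const_lt hc'] with n hn
      rw [lt_div_iff₀ (hy_sub n)] at hn
      linarith
    filter_upwards [h_le] with n hn
    exact hcc'.trans_le ((le_div_iff₀ (hy_pos n)).2 (by linarith))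
  · obtain ⟨c', hc', hcc'⟩ := exists_between hc
    have h_le : ∀ᶠ n in atTop, L - t n ≤ c' * y n := by
      refine eventually_sub_le_mul ht hy ?_
      filter_upwards [h_incr.eventually_lt_const hc'] with n hn
      exact ((div_lt_iff₀ (hy_sub n)).1 hn).le
    filter_upwards [h_le] with n hn
    exact ((div_le_iff₀ (hy_pos n)).2 hn).trans_lt hcc'

section Chain

variable {v M : ℕ → ℝ} {A : ℝ}
  (hv : ∀ n : ℕ, v (n + 1) * (2 * n + 2 + A + M n + M (n + 1)) = A + M (n + 1) - M n)

include hv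

lemma tendsto_zero_of_chain_relation {B : ℝ} (hM : ∀ n, |M n| ≤ B) : Tendsto v atTop (𝓝 0) := by
  rw [← tendsto_add_atTop_iff_nat 1]
  have h_linear : Tendsto (fun n : ℕ => (n : ℝ) + (2 + A - 2 * B)) atTop atTop :=
    tendsto_atTop_add_const_right _ _ tendsto_natCast_atTop_atTop
  have h_denom : Tendsto (fun n : ℕ => 2 * n + 2 + A + M n + M (n + 1)) atTop atTop := by
    refine tendsto_atTop_mono (fun n => ?_) h_linear
    have := neg_le_of_abs_le (hM n)
    have := neg_le_of_abs_le (hM (n + 1))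
    linarith [n.cast_nonneg (α := ℝ)]
  have h_quotient : Tendsto
      (fun n : ℕ => (A + M (n + 1) - M n) / (2 * n + 2 + A + M n + M (n + 1))) atTop (𝓝 0) := by
    refine tendsto_bdd_div_atTop_nhds_zero (b := A - 2 * B) (B := A + 2 * B)
      (Eventually.of_forall fun n => ?_) (Eventually.of_forall fun n => ?_) h_denom <;>
    linarith [abs_le.1 (hM n), abs_le.1 (hM (n + 1))]
  refine h_quotient.congr' ?_
  filter_upwards [h_denom.eventually_gt_atTop 0] with n hn
  rw [div_eq_iff hn.ne', hv]

lemma tendsto_natCast_mul_of_chain_relation {μ : ℝ} (hv_zero : Tendsto v atTop (𝓝 0))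
    (hM : Tendsto M atTop (𝓝 μ)) : Tendsto (fun n : ℕ => n * v n) atTop (𝓝 (A / 2)) := by
  rw [← tendsto_add_atTop_iff_nat 1]
  have hM_succ := (tendsto_add_atTop_iff_nat 1).2 hM
  have h_lim := (((hM_succ.const_add A).sub hM).sub
    (((tendsto_add_atTop_iff_nat 1).2 hv_zero).mul ((hM.const_add A).add hM_succ))).div_const 2
  rw [show (A + μ - μ - 0 * (A + μ + μ)) / 2 = A / 2 by ring] at h_lim
  refine h_lim.congr fun n => ?_
  push_cast
  linear_combination -hv n / 2

end Chain

section Expansion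

variable {v b c : ℕ → ℝ} {a : ℝ}

lemma tendsto_of_subleading_relation {M : ℕ → ℝ} {θ μ D : ℝ}
    (hc : ∀ n : ℕ, n + 2 + 2 * c n + θ * M (n + 1) = (2 * n + D) * b (n + 1))
    (hM : Tendsto M atTop (𝓝 μ)) (hb : Tendsto b atTop (𝓝 (1 / 4)))
    (hnb : Tendsto (fun n : ℕ => n * (b n - 1 / 4)) atTop (𝓝 0)) :
    Tendsto (fun n : ℕ => c n + (n + 2) / 4) atTop (𝓝 ((D - 4) / 8 - θ * μ / 2)) := by
  have hb_sub : Tendsto (fun n => (D - 2) * (b (n + 1) - 1 / 4)) atTop (𝓝 0) := by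
    simpa using (((tendsto_add_atTop_iff_nat 1).2 hb).sub_const (1 / 4)).const_mul (D - 2)
  have hM_succ := ((tendsto_add_atTop_iff_nat 1).2 hM).const_mul θ
  have h_lim := ((((((tendsto_add_atTop_iff_nat 1).2 hnb).const_mul 2).add hb_sub).add_const
    ((D - 4) / 4)).sub hM_succ).div_const 2
  rw [show (2 * 0 + 0 + (D - 4) / 4 - θ * μ) / 2 = (D - 4) / 8 - θ * μ / 2 by ring] at h_lim
  refine h_lim.congr fun n => ?_
  push_cast
  linear_combination -hc n / 2

variable (hb : ∀ n, b n = (1 + v n) * (1 - v (n + 1)) / 4)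

include hb

lemma tendsto_quarter_of_chain (hv : Tendsto v atTop (𝓝 0)) : Tendsto b atTop (𝓝 (1 / 4)) := by
  have hv_succ := (tendsto_add_atTop_iff_nat 1).2 hv
  simpa [← hb] using ((hv.const_add 1).mul (hv_succ.const_sub 1)).div_const 4

lemma tendsto_natCast_mul_sub_quarter_of_chain (hv : Tendsto v atTop (𝓝 0))
    (hnv : Tendsto (fun n : ℕ => n * v n) atTop (𝓝 a)) :
    Tendsto (fun n : ℕ => n * (b n - 1 / 4)) atTop (𝓝 0) := by
  have hv_succ := (tendsto_add_atTop_iff_nat 1).2 hv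
  have hnv_succ := (tendsto_add_atTop_iff_nat 1).2 hnv
  have h_lim := ((((hnv.sub hnv_succ).add hv_succ).sub (hnv.mul hv_succ))).div_const 4
  rw [show (a - a + 0 - a * 0) / 4 = 0 by ring] at h_lim
  refine h_lim.congr fun n => ?_
  rw [hb]
  push_cast
  ring

lemma tendsto_mul_sub_of_chain {L : ℝ} (hc : ∀ n, c (n + 1) = c n - b (n + 1))
    (hnv : Tendsto (fun n : ℕ => n * v n) atTop (𝓝 a)) (hv : Tendsto v atTop (𝓝 0))
    (hL : Tendsto (fun n : ℕ => c n + (n + 2) / 4) atTop (𝓝 L)) :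
    Tendsto (fun n : ℕ => (n + 2) * (c n + (n + 2) / 4 - L)) atTop (𝓝 ((a - a ^ 2) / 4)) := by
  have hv_succ := (tendsto_add_atTop_iff_nat 1).2 hv
  have h_shift : Tendsto (fun n : ℕ => (n + 2) * v (n + 1)) atTop (𝓝 a) := by
    have h_lim := ((tendsto_add_atTop_iff_nat 1).2 hnv).add hv_succ
    rw [add_zero] at h_lim
    exact h_lim.congr fun n => by push_cast; ring
  have h_stolz := tendsto_div_of_tendsto_sub_div_sub (L := L) (D := a ^ 2 / 4)
    (t := fun n => c n + (n + 2) / 4 - v (n + 1) / 4) (y := fun n => 1 / ((n : ℝ) + 2))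
    (by simpa using hL.sub (hv_succ.div_const 4))
    ((tendsto_add_atTop_iff_nat 2).2 tendsto_one_div_atTop_nhds_zero_nat |>.congr
      fun n => by push_cast; rfl)
    (strictAnti_nat_of_succ_lt fun n => one_div_lt_one_div_of_lt (by positivity) (by simp)) (by
      have h_lim := (h_shift.mul ((tendsto_add_atTop_iff_nat 1).2 h_shift)).div_const 4
      rw [← sq] at h_lim
      refine h_lim.congr fun n => ?_
      rw [hc, hb]
      push_cast
      field_simp
      ring)
  have h_lim := (h_shift.div_const 4).sub h_stolz
  rw [← sub_div] at h_lim
  refine h_lim.congr fun n => ?_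
  field_simp
  ring

end Expansion

end Sequences

section Asymptotics

open Filter Topology

lemma IsResolvent.sq_mul_apply_one_sub_X_sq_mul {Λ Φ : ℝ[X] →ₗ[ℝ] ℝ} {κ : ℝ}
    (hΦ : IsResolvent Φ Λ κ) (hΛ : IsEvenFunctional Λ) {p : ℝ[X]}
    (hp : p.comp (-X) = -p) :
    κ ^ 2 * Φ ((1 - X ^ 2) * p) = κ * Λ (X * p) - (1 - κ ^ 2) * Φ p := by
  have h_expand : κ ^ 2 • ((1 - X ^ 2) * p)
      = (1 - C κ * X) * (p + κ • (X * p)) - (1 - κ ^ 2) • p := by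
    simp only [smul_eq_C_mul, map_sub, map_pow, map_one]
    ring
  rw [← smul_eq_mul, ← map_smul, h_expand, map_sub, hΦ, map_add, hΛ.apply_eq_zero hp, zero_add,
    map_smul, map_smul, smul_eq_mul, smul_eq_mul]

namespace IsMonicOPS

variable {Λ Φ : ℝ[X] →ₗ[ℝ] ℝ} {s : Set ℝ} {P : ℕ → ℝ[X]} {h : ℕ → ℝ} {κ α β : ℝ}
  (H : IsMonicOPS Λ P h)

include H

lemma jacobiCoeff_le_one (hΛ_pos : IsPositiveOn Λ (Set.Icc (-1) 1)) (n : ℕ) :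
    jacobiCoeff h n ≤ 1 :=
  Real.sqrt_le_one.2 <| div_le_one_of_le₀ (H.norm_succ_le hΛ_pos n) (H.norm_pos hΛ_pos n).le

lemma abs_consecutiveEntry_le (hκ : |κ| < 1) (hΦ : IsResolvent Φ Λ κ)
    (hΛ_pos : IsPositiveOn Λ (Set.Icc (-1) 1)) (hΦ_pos : IsPositiveOn Φ (Set.Icc (-1) 1)) (n : ℕ) :
    |consecutiveEntry Φ P h n| ≤ (1 - |κ|)⁻¹ := by
  have h_nonneg : 0 ≤ jacobiCoeff h n := Real.sqrt_nonneg _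
  rw [H.consecutiveEntry_eq hΛ_pos, abs_mul, abs_of_nonneg h_nonneg]
  exact (mul_le_of_le_one_left (abs_nonneg _) (H.jacobiCoeff_le_one hΛ_pos n)).trans
    (hΦ.abs_apply_orthonormalize_mul_le H hκ hΛ_pos hΦ_pos _ _)

lemma tendsto_consecutiveEntry_of_tendsto_norm_ratio (hκ : |κ| < 1)
    (hΦ : IsResolvent Φ Λ κ) (hΛ : IsEvenFunctional Λ) (hΛ_pos : IsPositiveOn Λ s)
    (hΦ_pos : IsPositiveOn Φ (Set.Icc (-1) 1))
    (h_ratio : Tendsto (fun n => h (n + 1) / h n) atTop (𝓝 (1 / 4))) :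
    Tendsto (consecutiveEntry Φ P h) atTop (𝓝 (freeGreen κ 1 / 2)) := by
  have h_jacobi : Tendsto (jacobiCoeff h) atTop (𝓝 (1 / 2)) := by
    have h_sqrt := h_ratio.sqrt
    rwa [show √(1 / 4) = 1 / 2 by
      rw [Real.sqrt_eq_iff_mul_self_eq (by norm_num) (by norm_num)]; norm_num] at h_sqrt
  have h_green := tendsto_of_resolvent_recurrence hκ h_jacobi
    (ρ := fun n m => Φ (orthonormalize P h n * orthonormalize P h m))
    (hΦ.abs_apply_orthonormalize_mul_le H hκ hΛ_pos hΦ_pos)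
    (hΦ.apply_orthonormalize_recurrence H hΛ hΛ_pos) 1
  rw [show freeGreen κ 1 / 2 = 1 / 2 * freeGreen κ 1 by ring]
  exact (h_jacobi.mul h_green).congr fun n => (H.consecutiveEntry_eq hΛ_pos n).symm

lemma subleading_relation (hΛ : IsEvenFunctional Λ) (hΦ : IsResolvent Φ Λ κ) (hκ : κ ≠ 0)
    (hΨ : IsPearson Λ ((-2 * β * κ) • Φ) α) (n : ℕ) :
    n + 2 + 2 * (P (n + 2)).coeff n
        + 2 * β * (1 - κ ^ 2) / κ * consecutiveEntry Φ P h (n + 1)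
      = (2 * n + (5 + 2 * α + 2 * β)) * (h (n + 2) / h (n + 1)) := by
  have h_pearson := H.pearson_consecutive hΛ hΨ n
  have h_resolvent := hΦ.sq_mul_apply_one_sub_X_sq_mul hΛ
    (H.mul_comp_neg_X_of_odd hΛ (m := n + 2) (n := n + 1) ⟨n + 1, by ring⟩)
  rw [mul_left_comm X, H.apply_mul_X_mul (H.isMonicOfDegree (n + 1))] at h_resolvent
  rw [LinearMap.smul_apply, smul_eq_mul] at h_pearson
  have := H.norm_ne_zero (n + 1)
  unfold consecutiveEntry
  field_simp
  linear_combination κ * h_pearson + 2 * β * h_resolvent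

section Limits

variable (hΛ : IsEvenFunctional Λ) (hΛ_pos : IsPositiveOn Λ (Set.Icc (-1) 1))
  (hΦ_pos : IsPositiveOn Φ (Set.Icc (-1) 1)) (hκ : |κ| < 1) (hΦ : IsResolvent Φ Λ κ)
  (hΨ : IsPearson Λ ((-2 * β * κ) • Φ) α)

include hΛ hΛ_pos hΦ_pos hκ hΦ hΨ

lemma tendsto_chainDeviation : Tendsto (chainDeviation P) atTop (𝓝 0) :=
  tendsto_zero_of_chain_relation
    (H.chainDeviation_succ_mul hΛ hΨ (H.eval_right_ne_zero hΛ_pos)) fun n => by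
      rw [consecutiveEntry_smul, abs_mul]
      exact mul_le_mul_of_nonneg_left (H.abs_consecutiveEntry_le hκ hΦ hΛ_pos hΦ_pos n)
        (abs_nonneg _)

lemma tendsto_norm_ratio : Tendsto (fun n => h (n + 1) / h n) atTop (𝓝 (1 / 4)) :=
  tendsto_quarter_of_chain (H.norm_succ_div_norm hΛ (H.eval_right_ne_zero hΛ_pos))
    (H.tendsto_chainDeviation hΛ hΛ_pos hΦ_pos hκ hΦ hΨ)

lemma tendsto_consecutiveEntry :
    Tendsto (consecutiveEntry Φ P h) atTop (𝓝 (freeGreen κ 1 / 2)) :=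
  H.tendsto_consecutiveEntry_of_tendsto_norm_ratio hκ hΦ hΛ hΛ_pos hΦ_pos
    (H.tendsto_norm_ratio hΛ hΛ_pos hΦ_pos hκ hΦ hΨ)

lemma tendsto_natCast_mul_chainDeviation :
    Tendsto (fun n : ℕ => n * chainDeviation P n) atTop (𝓝 ((1 + 2 * α) / 2)) :=
  tendsto_natCast_mul_of_chain_relation
    (H.chainDeviation_succ_mul hΛ hΨ (H.eval_right_ne_zero hΛ_pos))
    (H.tendsto_chainDeviation hΛ hΛ_pos hΦ_pos hκ hΦ hΨ)
    (((H.tendsto_consecutiveEntry hΛ hΛ_pos hΦ_pos hκ hΦ hΨ).const_mul (-2 * β * κ)).congr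
      fun _ => (consecutiveEntry_smul ..).symm)

lemma tendsto_coeff (hκ_ne : κ ≠ 0) :
    Tendsto (fun n : ℕ => (P (n + 2)).coeff n + (n + 2) / 4) atTop
      (𝓝 ((α - β) / 4 + 1 / 8 + β * (1 - √(1 - κ ^ 2)) / (2 * κ ^ 2))) := by
  have h_lim := tendsto_of_subleading_relation (H.subleading_relation hΛ hΦ hκ_ne hΨ)
    (H.tendsto_consecutiveEntry hΛ hΛ_pos hΦ_pos hκ hΦ hΨ)
    (H.tendsto_norm_ratio hΛ hΛ_pos hΦ_pos hκ hΦ hΨ)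
    (tendsto_natCast_mul_sub_quarter_of_chain
      (H.norm_succ_div_norm hΛ (H.eval_right_ne_zero hΛ_pos))
      (H.tendsto_chainDeviation hΛ hΛ_pos hΦ_pos hκ hΦ hΨ)
      (H.tendsto_natCast_mul_chainDeviation hΛ hΛ_pos hΦ_pos hκ hΦ hΨ))
  convert h_lim using 2
  field_simp
  linear_combination 32 * β * mul_freeGreen_one hκ

lemma tendsto_mul_coeff (hκ_ne : κ ≠ 0) :
    Tendsto (fun n : ℕ => (n + 2) * ((P (n + 2)).coeff n + (n + 2) / 4
        - ((α - β) / 4 + 1 / 8 + β * (1 - √(1 - κ ^ 2)) / (2 * κ ^ 2)))) atTop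
      (𝓝 ((1 - 4 * α ^ 2) / 16)) := by
  have h_lim := tendsto_mul_sub_of_chain
    (H.norm_succ_div_norm hΛ (H.eval_right_ne_zero hΛ_pos)) (H.coeff_recurrence hΛ)
    (H.tendsto_natCast_mul_chainDeviation hΛ hΛ_pos hΦ_pos hκ hΦ hΨ)
    (H.tendsto_chainDeviation hΛ hΛ_pos hΦ_pos hκ hΦ hΨ)
    (H.tendsto_coeff hΛ hΛ_pos hΦ_pos hκ hΦ hΨ hκ_ne)
  rwa [show ((1 + 2 * α) / 2 - ((1 + 2 * α) / 2) ^ 2) / 4 = (1 - 4 * α ^ 2) / 16 by ring] at h_lim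

end Limits

end IsMonicOPS

end Asymptotics

section PolyIntegral

variable {v : ℝ → ℝ} {a b : ℝ}

lemma intervalIntegrable_eval_mul (hv : IntervalIntegrable v volume a b) (p : ℝ[X]) :
    IntervalIntegrable (fun x => p.eval x * v x) volume a b :=
  hv.continuousOn_mul p.continuous.continuousOn

/-- Integration of polynomials against the weight `v` on the interval from `a` to `b`. -/
noncomputable def polyIntegral (hv : IntervalIntegrable v volume a b) : ℝ[X] →ₗ[ℝ] ℝ where
  toFun p := ∫ x in a..b, p.eval x * v x
  map_add' p q := by
    simp only [eval_add, add_mul]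
    exact intervalIntegral.integral_add (intervalIntegrable_eval_mul hv p)
      (intervalIntegrable_eval_mul hv q)
  map_smul' c p := by
    simp only [eval_smul, smul_eq_mul, mul_assoc, intervalIntegral.integral_const_mul,
      RingHom.id_apply]

lemma polyIntegral_apply (hv : IntervalIntegrable v volume a b) (p : ℝ[X]) :
    polyIntegral hv p = ∫ x in a..b, p.eval x * v x :=
  rfl

lemma isPositiveOn_polyIntegral (hv : IntervalIntegrable v volume a b) (hab : a ≤ b)
    (hv_nonneg : ∀ x ∈ Set.Icc a b, 0 ≤ v x) : IsPositiveOn (polyIntegral hv) (Set.Icc a b) :=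
  fun _ hp => intervalIntegral.integral_nonneg hab fun x hx =>
    mul_nonneg (hp x hx) (hv_nonneg x hx)

lemma polyIntegral_comp_neg_X (hv : IntervalIntegrable v volume (-a) a) (p : ℝ[X]) :
    polyIntegral hv (p.comp (-X)) = ∫ x in -a..a, p.eval x * v (-x) := by
  have h_neg := intervalIntegral.integral_comp_neg (a := -a) (b := a) fun x => p.eval x * v (-x)
  rw [neg_neg] at h_neg
  simp only [polyIntegral_apply, ← h_neg, eval_comp, eval_neg, eval_X, neg_neg]

lemma isEvenFunctional_polyIntegral (hv : IntervalIntegrable v volume (-a) a)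
    (hv_even : ∀ x, v (-x) = v x) : IsEvenFunctional (polyIntegral hv) := fun p => by
  rw [polyIntegral_comp_neg_X, polyIntegral_apply]
  simp only [hv_even]

lemma isResolvent_polyIntegral {κ : ℝ} (hv : IntervalIntegrable v volume a b)
    (hv_div : IntervalIntegrable (fun x => (1 - κ * x)⁻¹ * v x) volume a b)
    (hκ : ∀ x ∈ Set.uIcc a b, 1 - κ * x ≠ 0) :
    IsResolvent (polyIntegral hv_div) (polyIntegral hv) κ := fun p => by
  refine intervalIntegral.integral_congr fun x hx => ?_
  have := hκ x hx
  simp only [eval_mul, eval_sub, eval_one, eval_C, eval_X]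
  field_simp

end PolyIntegral

section EvenJacobiWeight

/-- The weight `(1 - x²) ^ α (1 - k² x²) ^ β`, parametrized by `κ = k`. -/
noncomputable def evenJacobiWeight (α β κ x : ℝ) : ℝ :=
  (1 - x ^ 2) ^ α * (1 - κ ^ 2 * x ^ 2) ^ β

variable {α β κ : ℝ}

lemma one_sub_mul_pos (hκ : |κ| < 1) {x : ℝ} (hx : x ∈ Set.Icc (-1 : ℝ) 1) : 0 < 1 - κ * x := by
  have h_abs : |κ * x| < 1 := by
    rw [abs_mul]
    exact mul_lt_one_of_nonneg_of_lt_one_left (abs_nonneg κ) hκ (abs_le.2 hx)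
  exact sub_pos.2 (abs_lt.1 h_abs).2

lemma one_add_mul_pos (hκ : |κ| < 1) {x : ℝ} (hx : x ∈ Set.Icc (-1 : ℝ) 1) : 0 < 1 + κ * x := by
  simpa using one_sub_mul_pos (κ := -κ) (by rwa [abs_neg]) hx

lemma one_sub_sq_mul_sq_pos (hκ : |κ| < 1) {x : ℝ} (hx : x ∈ Set.Icc (-1 : ℝ) 1) :
    0 < 1 - κ ^ 2 * x ^ 2 := by
  rw [show 1 - κ ^ 2 * x ^ 2 = (1 - κ * x) * (1 + κ * x) by ring]
  exact mul_pos (one_sub_mul_pos hκ hx) (one_add_mul_pos hκ hx)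

lemma evenJacobiWeight_neg (x : ℝ) : evenJacobiWeight α β κ (-x) = evenJacobiWeight α β κ x := by
  rw [evenJacobiWeight, evenJacobiWeight, neg_sq]

lemma evenJacobiWeight_nonneg (hκ : |κ| < 1) {x : ℝ} (hx : x ∈ Set.Icc (-1 : ℝ) 1) :
    0 ≤ evenJacobiWeight α β κ x :=
  mul_nonneg (Real.rpow_nonneg (by nlinarith [hx.1, hx.2]) _)
    (Real.rpow_nonneg (one_sub_sq_mul_sq_pos hκ hx).le _)

lemma intervalIntegrable_one_sub_sq_rpow (hα : -1 < α) :
    IntervalIntegrable (fun x : ℝ => (1 - x ^ 2) ^ α) volume (-1) 1 := by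
  have h_right : IntervalIntegrable (fun x : ℝ => (1 - x ^ 2) ^ α) volume 0 1 := by
    have h_singular : IntervalIntegrable (fun x : ℝ => (1 - x) ^ α) volume 0 1 := by
      simpa using ((intervalIntegral.intervalIntegrable_rpow' (a := 0) (b := 1) hα).comp_sub_left
        1).symm
    have h_continuous : ContinuousOn (fun x : ℝ => (1 + x) ^ α) (Set.uIcc 0 1) := by
      rw [Set.uIcc_of_le zero_le_one]
      exact ContinuousOn.rpow_const (by fun_prop) fun x hx => Or.inl (by linarith [hx.1])
    refine (h_singular.continuousOn_mul h_continuous).congr fun x hx => ?_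
    rw [Set.uIoc_of_le zero_le_one] at hx
    rw [← Real.mul_rpow (by linarith [hx.1]) (by linarith [hx.2])]
    ring_nf
  have h_left : IntervalIntegrable (fun x : ℝ => (1 - x ^ 2) ^ α) volume (-1) 0 := by
    simpa using ((IntervalIntegrable.iff_comp_neg (by simp)).1 h_right).symm
  exact h_left.trans h_right

lemma intervalIntegrable_evenJacobiWeight (β : ℝ) (hα : -1 < α) (hκ : |κ| < 1) :
    IntervalIntegrable (evenJacobiWeight α β κ) volume (-1) 1 := by
  refine (intervalIntegrable_one_sub_sq_rpow hα).mul_continuousOn ?_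
  rw [Set.uIcc_of_le (by norm_num)]
  exact ContinuousOn.rpow_const (by fun_prop)
    fun x hx => Or.inl (one_sub_sq_mul_sq_pos hκ hx).ne'

lemma intervalIntegrable_inv_mul_evenJacobiWeight (β : ℝ) (hα : -1 < α) (hκ : |κ| < 1) :
    IntervalIntegrable (fun x => (1 - κ * x)⁻¹ * evenJacobiWeight α β κ x) volume (-1) 1 := by
  refine (intervalIntegrable_evenJacobiWeight β hα hκ).continuousOn_mul ?_
  rw [Set.uIcc_of_le (by norm_num)]
  exact ContinuousOn.inv₀ (by fun_prop) fun x hx => (one_sub_mul_pos hκ hx).ne'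

/-- Integration of polynomials against `evenJacobiWeight α β κ` on `[-1, 1]`. -/
noncomputable def evenJacobiIntegral (β : ℝ) (hα : -1 < α) (hκ : |κ| < 1) : ℝ[X] →ₗ[ℝ] ℝ :=
  polyIntegral (intervalIntegrable_evenJacobiWeight β hα hκ)

/-- Integration of polynomials against `(1 - κ x)⁻¹ * evenJacobiWeight α β κ x` on `[-1, 1]`. -/
noncomputable def evenJacobiResolvent (β : ℝ) (hα : -1 < α) (hκ : |κ| < 1) : ℝ[X] →ₗ[ℝ] ℝ :=
  polyIntegral (intervalIntegrable_inv_mul_evenJacobiWeight β hα hκ)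

lemma hasDerivAt_one_sub_sq_mul_evenJacobiWeight (hκ : |κ| < 1) {x : ℝ}
    (hx : x ∈ Set.Ioo (-1 : ℝ) 1) :
    HasDerivAt (fun y => (1 - y ^ 2) ^ (α + 1) * (1 - κ ^ 2 * y ^ 2) ^ β)
      (-(2 * (α + 1) * x + 2 * β * κ ^ 2 * x * (1 - x ^ 2) / (1 - κ ^ 2 * x ^ 2))
        * evenJacobiWeight α β κ x) x := by
  have h_pos : 0 < 1 - x ^ 2 := by nlinarith [hx.1, hx.2]
  have hκ_pos := one_sub_sq_mul_sq_pos hκ (Set.Ioo_subset_Icc_self hx)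
  have h_left : HasDerivAt (fun y : ℝ => 1 - y ^ 2) (-(2 * x)) x := by
    simpa using (hasDerivAt_pow 2 x).const_sub 1
  have h_right : HasDerivAt (fun y : ℝ => 1 - κ ^ 2 * y ^ 2) (-(κ ^ 2 * (2 * x))) x := by
    simpa using ((hasDerivAt_pow 2 x).const_mul (κ ^ 2)).const_sub 1
  refine ((h_left.rpow_const (p := α + 1) (Or.inl h_pos.ne')).mul
    (h_right.rpow_const (p := β) (Or.inl hκ_pos.ne'))).congr_deriv ?_
  rw [evenJacobiWeight, add_sub_cancel_right, Real.rpow_add_one h_pos.ne',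
    Real.rpow_sub_one hκ_pos.ne']
  field_simp
  ring

lemma intervalIntegrable_div_mul_evenJacobiWeight (β : ℝ) (hα : -1 < α) (hκ : |κ| < 1) :
    IntervalIntegrable (fun x => 2 * κ * x / (1 - κ ^ 2 * x ^ 2) * evenJacobiWeight α β κ x)
      volume (-1) 1 := by
  refine (intervalIntegrable_evenJacobiWeight β hα hκ).continuousOn_mul ?_
  rw [Set.uIcc_of_le (by norm_num)]
  exact ContinuousOn.div (by fun_prop) (by fun_prop)
    fun x hx => (one_sub_sq_mul_sq_pos hκ hx).ne'

section Functionals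

variable (β : ℝ) (hα : -1 < α) (hκ : |κ| < 1)

lemma evenJacobiResolvent_comp_neg_X (p : ℝ[X]) :
    evenJacobiResolvent β hα hκ (p.comp (-X))
      = ∫ x in (-1 : ℝ)..1, p.eval x * ((1 + κ * x)⁻¹ * evenJacobiWeight α β κ x) := by
  rw [evenJacobiResolvent, polyIntegral_comp_neg_X]
  simp only [evenJacobiWeight_neg, mul_neg, sub_neg_eq_add]

lemma isEvenFunctional_evenJacobiIntegral : IsEvenFunctional (evenJacobiIntegral β hα hκ) :=
  isEvenFunctional_polyIntegral _ evenJacobiWeight_neg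

lemma isPositiveOn_evenJacobiIntegral :
    IsPositiveOn (evenJacobiIntegral β hα hκ) (Set.Icc (-1) 1) :=
  isPositiveOn_polyIntegral _ (by norm_num) fun _ => evenJacobiWeight_nonneg hκ

lemma isPositiveOn_evenJacobiResolvent :
    IsPositiveOn (evenJacobiResolvent β hα hκ) (Set.Icc (-1) 1) :=
  isPositiveOn_polyIntegral _ (by norm_num) fun _ hx =>
    mul_nonneg (inv_nonneg.2 (one_sub_mul_pos hκ hx).le) (evenJacobiWeight_nonneg hκ hx)

lemma isResolvent_evenJacobiResolvent :
    IsResolvent (evenJacobiResolvent β hα hκ) (evenJacobiIntegral β hα hκ) κ :=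
  isResolvent_polyIntegral _ _ fun _ hx =>
    (one_sub_mul_pos hκ (by rwa [Set.uIcc_of_le (by norm_num)] at hx)).ne'

lemma evenJacobiResolvent_sub_comp_neg_X (p : ℝ[X]) :
    evenJacobiResolvent β hα hκ p - evenJacobiResolvent β hα hκ (p.comp (-X))
      = polyIntegral (intervalIntegrable_div_mul_evenJacobiWeight β hα hκ) p := by
  have h_plus : IntervalIntegrable (fun x => (1 + κ * x)⁻¹ * evenJacobiWeight α β κ x)
      volume (-1) 1 := by
    simpa [evenJacobiWeight] using
      intervalIntegrable_inv_mul_evenJacobiWeight (κ := -κ) β hα (by rwa [abs_neg])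
  rw [evenJacobiResolvent_comp_neg_X, evenJacobiResolvent, polyIntegral_apply, polyIntegral_apply,
    ← intervalIntegral.integral_sub
      (intervalIntegrable_eval_mul (intervalIntegrable_inv_mul_evenJacobiWeight β hα hκ) p)
      (intervalIntegrable_eval_mul h_plus p)]
  refine intervalIntegral.integral_congr fun x hx => ?_
  rw [Set.uIcc_of_le (by norm_num)] at hx
  have := (one_sub_mul_pos hκ hx).ne'
  have := (one_add_mul_pos hκ hx).ne'
  rw [show 1 - κ ^ 2 * x ^ 2 = (1 - κ * x) * (1 + κ * x) by ring]
  field_simp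
  ring

lemma evenJacobiIntegral_pearson (R : ℝ[X]) :
    evenJacobiIntegral β hα hκ ((1 - X ^ 2) * derivative R - C (2 * (α + 1)) * (X * R))
      - β * κ * polyIntegral (intervalIntegrable_div_mul_evenJacobiWeight β hα hκ)
          ((1 - X ^ 2) * R) = 0 := by
  have h_continuous : ContinuousOn
      (fun x => (1 - x ^ 2) ^ (α + 1) * (1 - κ ^ 2 * x ^ 2) ^ β * R.eval x) (Set.Icc (-1) 1) := by
    refine .mul (.mul ?_ ?_) R.continuous.continuousOn
    · exact ContinuousOn.rpow_const (by fun_prop) fun _ _ => Or.inr (by linarith)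
    · exact ContinuousOn.rpow_const (by fun_prop)
        fun x hx => Or.inl (one_sub_sq_mul_sq_pos hκ hx).ne'
  have h_left := intervalIntegrable_eval_mul (intervalIntegrable_evenJacobiWeight β hα hκ)
    ((1 - X ^ 2) * derivative R - C (2 * (α + 1)) * (X * R))
  have h_right := (intervalIntegrable_eval_mul
    (intervalIntegrable_div_mul_evenJacobiWeight β hα hκ) ((1 - X ^ 2) * R)).const_mul (β * κ)
  have h_boundary := intervalIntegral.integral_eq_sub_of_hasDerivAt_of_le (by norm_num)
    h_continuous (fun x hx => ((hasDerivAt_one_sub_sq_mul_evenJacobiWeight hκ hx).mul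
      (R.hasDerivAt x)).congr_deriv ?_) (h_left.sub h_right)
  · rw [evenJacobiIntegral, polyIntegral_apply, polyIntegral_apply,
      ← intervalIntegral.integral_const_mul, ← intervalIntegral.integral_sub h_left h_right,
      h_boundary]
    simp [Real.zero_rpow (by linarith : α + 1 ≠ 0)]
  · have h_pos : 0 < 1 - x ^ 2 := by nlinarith [hx.1, hx.2]
    simp only [evenJacobiWeight, Real.rpow_add_one h_pos.ne', eval_sub, eval_mul, eval_one,
      eval_pow, eval_X, eval_C]
    ring

lemma isPearson_evenJacobiIntegral :
    IsPearson (evenJacobiIntegral β hα hκ) ((-2 * β * κ) • evenJacobiResolvent β hα hκ) α := by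
  intro R hR
  have h_odd : ((1 - X ^ 2) * R).comp (-X) = -((1 - X ^ 2) * R) := by
    rw [mul_comp, hR]
    simp
  have h_sub := evenJacobiResolvent_sub_comp_neg_X β hα hκ ((1 - X ^ 2) * R)
  rw [h_odd, map_neg] at h_sub
  rw [LinearMap.smul_apply, smul_eq_mul]
  linear_combination evenJacobiIntegral_pearson β hα hκ R - β * κ * h_sub

end Functionals

end EvenJacobiWeight

end OrthogonalPolynomials

/-- Large `n` asymptotics of the sub-leading coefficient:
with `b₀ = (α−β)/4 + 1/8 + β(1−√(1−k²))/(2k²)` and `b₁ = (1−4α²)/16`, one has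
`p1(n) + n/4 → b₀` and `n(p1(n) + n/4 − b₀) → b₁`. -/
theorem stmt_19
    (α β k2 : ℝ) (hα : -1 < α) (hk2 : k2 ∈ Set.Ioo (0:ℝ) 1)
    (w : ℝ → ℝ)
    (hw : ∀ x : ℝ, w x = (1 - x ^ 2) ^ α * (1 - k2 * x ^ 2) ^ β)
    (P : ℕ → Polynomial ℝ)
    (hPmonic : ∀ n, (P n).Monic)
    (hPdeg : ∀ n, (P n).natDegree = n)
    (h : ℕ → ℝ) (hpos : ∀ n, 0 < h n)
    (horth : ∀ m n : ℕ,
      (∫ x in (-1:ℝ)..1, (P m).eval x * (P n).eval x * w x)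
        = if m = n then h n else 0)
    (p1 : ℕ → ℝ) (hp10 : p1 0 = 0) (hp11 : p1 1 = 0)
    (hp1 : ∀ n : ℕ, 2 ≤ n → p1 n = (P n).coeff (n - 2)) :
    Filter.Tendsto (fun n : ℕ => p1 n + (n:ℝ) / 4) Filter.atTop
      (nhds ((α - β) / 4 + 1/8 + β * (1 - Real.sqrt (1 - k2)) / (2 * k2))) ∧
    Filter.Tendsto
      (fun n : ℕ => (n:ℝ) * (p1 n + (n:ℝ) / 4
        - ((α - β) / 4 + 1/8 + β * (1 - Real.sqrt (1 - k2)) / (2 * k2))))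
      Filter.atTop (nhds ((1 - 4 * α ^ 2) / 16)) := by
  obtain ⟨κ, hκ_pos, hκ_lt, rfl⟩ : ∃ κ : ℝ, 0 < κ ∧ κ < 1 ∧ κ ^ 2 = k2 :=
    ⟨√k2, Real.sqrt_pos.2 hk2.1, (Real.sqrt_lt' one_pos).2 (by simpa using hk2.2),
      Real.sq_sqrt hk2.1.le⟩
  obtain rfl : w = evenJacobiWeight α β κ := funext hw
  have hκ : |κ| < 1 := by rwa [abs_of_pos hκ_pos]
  have H : IsMonicOPS (evenJacobiIntegral β hα hκ) P h :=
    ⟨fun n => ⟨hPdeg n, hPmonic n⟩, fun n => (hpos n).ne', fun m n => by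
      simpa only [evenJacobiIntegral, polyIntegral_apply, Polynomial.eval_mul] using horth m n⟩
  have hΛ := isEvenFunctional_evenJacobiIntegral β hα hκ
  have hΛ_pos := isPositiveOn_evenJacobiIntegral β hα hκ
  have hΦ_pos := isPositiveOn_evenJacobiResolvent β hα hκ
  have hΦ := isResolvent_evenJacobiResolvent β hα hκ
  have hΨ := isPearson_evenJacobiIntegral β hα hκ
  have hp1_shift (n : ℕ) : p1 (n + 2) = (P (n + 2)).coeff n := hp1 (n + 2) (by omega)
  constructor <;> rw [← Filter.tendsto_add_atTop_iff_nat 2] <;>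
    simp only [hp1_shift, Nat.cast_add, Nat.cast_ofNat]
  · exact H.tendsto_coeff hΛ hΛ_pos hΦ_pos hκ hΦ hΨ hκ_pos.ne'
  · exact H.tendsto_mul_coeff hΛ hΛ_pos hΦ_pos hκ hΦ hΨ hκ_pos.ne'
end
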